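/- arXiv:1911.01210 — 6 statements merged into one kernel-verified Lean document; each statement's English description precedes it below -/
import Mathlib

section
/- The subgroup Λ of SL₂(ℤ[√5]) generated by the four matrices A, A′, B, B′ has finite index in SL₂(ℤ[√5]). (This is the concrete form of the arithmeticity theorem: these four matrices generate the monodromy group of the Wiman–Edge pencil, which is therefore an arithmetic group.) -/
/-!
The four matrices are Picard–Lefschetz transvections `x ↦ x + r * det (w, x) * w`, and conjugating
a transvection by `g` only moves its vector from `w` to `g w`.

Let `Λ` be the group they generate, `P` the transvection along `(1, -1)` with coefficient `1`, and
`D` the element `[[-1, 2], [-1, 1]]` of order four. Then `P` normalizes `Λ` and `P ^ 2 ∈ Λ`, while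
`D` normalizes `⟨Λ, P⟩` and `D ^ 4 = 1`. So `Λ` has finite index as soon as `H = ⟨Λ, P, D⟩` has.
The latter is the preimage of a Borel subgroup of `SL₂(𝔽₅)` under reduction modulo `√5`, and its
six cosets correspond to the lines of `𝔽₅²`: an explicit set of six cosets is stable under
`[[0, 1], [-1, 0]]` and under all upper unipotent matrices.

These matrices generate `SL₂(ℤ[√5])` although `ℤ[√5]` is not Euclidean for the norm. Division with
remainder fails only when the quotient is congruent to `(1 + √5) / 2`, and then dividend and
divisor both lie in the prime ideal `(2, 1 + √5)`. This cannot happen for the coprime entries of a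
row, so the Euclidean algorithm on rows still terminates.
-/

/-- `R5` is the ring `ℤ[√5]`. -/
abbrev R5 := Zsqrtd 5

/-- `SL₂(ℤ[√5])`. -/
abbrev SL2R5 := Matrix.SpecialLinearGroup (Fin 2) R5

/-- The matrix `A = [[1, √5],[0, 1]]`. -/
def A : SL2R5 :=
  ⟨!![1, Zsqrtd.sqrtd; 0, 1], by rw [Matrix.det_fin_two_of]; decide⟩

/-- The matrix `A′ = [[1, 0],[−√5, 1]]`. -/
def A' : SL2R5 :=
  ⟨!![1, 0; -Zsqrtd.sqrtd, 1], by rw [Matrix.det_fin_two_of]; decide⟩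

/-- The matrix `B = [[3+√5, 2+√5],[−2−√5, −1−√5]]`. -/
def B : SL2R5 :=
  ⟨!![3 + Zsqrtd.sqrtd, 2 + Zsqrtd.sqrtd; -(2 + Zsqrtd.sqrtd), -(1 + Zsqrtd.sqrtd)], by
    rw [Matrix.det_fin_two_of]; decide⟩

/-- The matrix `B′ = [[−1+√5, −2+√5],[2−√5, 3−√5]]`. -/
def B' : SL2R5 :=
  ⟨!![-1 + Zsqrtd.sqrtd, -2 + Zsqrtd.sqrtd; 2 - Zsqrtd.sqrtd, 3 - Zsqrtd.sqrtd], by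
    rw [Matrix.det_fin_two_of]; decide⟩

namespace WimanEdge

section FiniteIndex

open Subgroup
open scoped Pointwise

variable {G : Type*} [Group G]

lemma finite_of_smul_mem {α : Type*} [MulAction G α] [MulAction.IsPretransitive G α] {T : Set G}
    (hT : closure T = ⊤) {X : Set α} (hX : X.Finite) (hne : X.Nonempty)
    (hTX : ∀ t ∈ T, ∀ x ∈ X, t • x ∈ X) : Finite α := by
  have hstab : MulAction.stabilizer G X = ⊤ := by
    rw [eq_top_iff, ← hT, closure_le]
    intro t ht
    rw [SetLike.mem_coe, MulAction.mem_stabilizer_set_iff_smul_set_subset hX]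
    rintro _ ⟨x, hx, rfl⟩
    exact hTX t ht x hx
  obtain ⟨x₀, hx₀⟩ := hne
  have huniv : X = Set.univ := by
    refine Set.eq_univ_of_forall fun x => ?_
    obtain ⟨g, rfl⟩ := MulAction.exists_smul_eq G x₀ x
    have hg : g ∈ MulAction.stabilizer G X := hstab ▸ mem_top g
    exact (MulAction.mem_stabilizer_set.mp hg x₀).mpr hx₀
  exact Set.finite_univ_iff.mp (huniv ▸ hX)

lemma relIndex_zpowers_ne_zero {N : Subgroup G} {g : G} {n : ℕ} (hn : n ≠ 0) (hg : g ^ n ∈ N) :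
    N.relIndex (zpowers g) ≠ 0 := by
  have hle : (AddSubgroup.zmultiples (n : ℤ)).toSubgroup ≤ N.comap (zpowersHom G g) := by
    rintro _ ⟨k, rfl⟩
    change g ^ (k * (n : ℤ)) ∈ N
    rw [mul_comm, zpow_mul, zpow_natCast]
    exact zpow_mem hg k
  have hdvd := index_dvd_of_le hle
  rw [index_comap, AddSubgroup.index_toSubgroup, Int.index_zmultiples, Int.natAbs_natCast] at hdvd
  exact ne_zero_of_dvd_ne_zero hn hdvd

lemma relIndex_sup_of_le_normalizer {H N : Subgroup G} (h : H ≤ normalizer (N : Set G)) :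
    N.relIndex (H ⊔ N) = N.relIndex H :=
  letI := normal_subgroupOf_of_le_normalizer h
  letI := normal_subgroupOf_sup_of_le_normalizer h
  Nat.card_congr (QuotientGroup.quotientInfEquivProdNormalizerQuotient H N h).symm.toEquiv

lemma mem_normalizer_closure_of_pow_mem {s : Set G} {g : G} {n : ℕ} (hn : n ≠ 0)
    (hpow : g ^ n ∈ closure s) (hconj : ∀ x ∈ s, g * x * g⁻¹ ∈ closure s) :
    g ∈ normalizer (closure s : Set G) := by
  have hle : closure s ≤ (closure s).comap (MulAut.conj g).toMonoidHom :=
    (closure_le _).mpr hconj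
  have hpow_conj (k : ℕ) {x : G} (hx : x ∈ closure s) : g ^ k * x * (g ^ k)⁻¹ ∈ closure s := by
    induction k with
    | zero => simpa
    | succ k ih => simpa [pow_succ', mul_assoc] using hle ih
  refine mem_normalizer_iff.mpr fun x => ⟨fun hx => hle hx, fun hx => ?_⟩
  have hmem := hpow_conj (n - 1) hx
  have heq : g ^ (n - 1) * (g * x * g⁻¹) * (g ^ (n - 1))⁻¹ = g ^ n * x * (g ^ n)⁻¹ := by
    rw [← pow_sub_one_mul hn g]
    group
  rwa [heq, mul_mem_cancel_right (inv_mem hpow), mul_mem_cancel_left hpow] at hmem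

lemma finiteIndex_closure_of_insert {s : Set G} {g : G} {n : ℕ} (hn : n ≠ 0)
    (hpow : g ^ n ∈ closure s) (hconj : ∀ x ∈ s, g * x * g⁻¹ ∈ closure s)
    (hfin : (closure (insert g s)).FiniteIndex) : (closure s).FiniteIndex := by
  have hnorm : zpowers g ≤ normalizer (closure s : Set G) :=
    zpowers_le.mpr (mem_normalizer_closure_of_pow_mem hn hpow hconj)
  rw [Set.insert_eq, Subgroup.closure_union, ← zpowers_eq_closure] at hfin
  refine ⟨?_⟩
  rw [← relIndex_mul_index (le_sup_right : closure s ≤ zpowers g ⊔ closure s),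
    relIndex_sup_of_le_normalizer hnorm]
  exact mul_ne_zero (relIndex_zpowers_ne_zero hn hpow) hfin.index_ne_zero

end FiniteIndex

open Matrix MatrixGroups
open Zsqrtd (sqrtd)

section Shear

variable {R : Type*} [CommRing R]

/-- The Picard–Lefschetz transvection `x ↦ x + r * det (w, x) * w` along the vector `w` with
coefficient `r`. -/
def shear (w : Fin 2 → R) (r : R) : SL(2, R) :=
  ⟨!![1 - w 0 * w 1 * r, w 0 ^ 2 * r; -(w 1 ^ 2 * r), 1 + w 0 * w 1 * r], by
    rw [det_fin_two_of]; ring⟩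

lemma coe_shear (w : Fin 2 → R) (r : R) : (shear w r : Matrix (Fin 2) (Fin 2) R) =
    !![1 - w 0 * w 1 * r, w 0 ^ 2 * r; -(w 1 ^ 2 * r), 1 + w 0 * w 1 * r] := rfl

lemma shear_zero (w : Fin 2 → R) : shear w 0 = 1 := by
  ext i j
  fin_cases i <;> fin_cases j <;> simp [coe_shear]

lemma shear_add (w : Fin 2 → R) (r s : R) : shear w (r + s) = shear w r * shear w s := by
  ext i j
  fin_cases i <;> fin_cases j <;> simp [coe_shear] <;> ring

lemma inv_shear (w : Fin 2 → R) (r : R) : (shear w r)⁻¹ = shear w (-r) := by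
  rw [inv_eq_iff_mul_eq_one, ← shear_add, add_neg_cancel, shear_zero]

lemma shear_zsmul (w : Fin 2 → R) (r : R) (n : ℤ) : shear w (n • r) = shear w r ^ n :=
  map_zpow (MonoidHom.mk' (fun r : Multiplicative R => shear w r.toAdd) fun r s =>
    shear_add w r.toAdd s.toAdd) (.ofAdd r) n

lemma shear_smul (u : R) (w : Fin 2 → R) (r : R) : shear (u • w) r = shear w (u ^ 2 * r) := by
  ext i j
  fin_cases i <;> fin_cases j <;> simp [coe_shear] <;> ring

lemma shear_neg (w : Fin 2 → R) (r : R) : shear (-w) r = shear w r := by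
  ext i j
  fin_cases i <;> fin_cases j <;> simp [coe_shear]

lemma conj_shear (g : SL(2, R)) (w : Fin 2 → R) (r : R) :
    g * shear w r * g⁻¹ = shear (g.1 *ᵥ w) r := by
  have hdet := det_fin_two g.1 ▸ g.2
  rw [mul_inv_eq_iff_eq_mul]
  ext i j
  fin_cases i <;> fin_cases j <;> simp [coe_shear, mul_apply] <;> grind

lemma shear_mem_of_dvd_re {d : ℤ} {H : Subgroup SL(2, ℤ√d)} {w : Fin 2 → ℤ√d} {n : ℤ}
    (hn : shear w n ∈ H) (hsqrtd : shear w sqrtd ∈ H) {r : ℤ√d} (hr : n ∣ r.re) :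
    shear w r ∈ H := by
  obtain ⟨k, hk⟩ := hr
  have hr : r = k • (n : ℤ√d) + r.im • sqrtd := by
    ext <;> simp [hk, mul_comm]
  rw [hr, shear_add, shear_zsmul, shear_zsmul]
  exact mul_mem (zpow_mem hn _) (zpow_mem hsqrtd _)

end Shear

section Generation

variable {R : Type*} [CommRing R]

/-- The Weyl element of `SL₂`, with the sign for which `weyl * shear ![1, 0] r * weyl⁻¹` is
`shear ![0, 1] r`. -/
def weyl : SL(2, R) := ⟨!![0, 1; -1, 0], by simp⟩

lemma coe_weyl : ((weyl : SL(2, R)) : Matrix (Fin 2) (Fin 2) R) = !![0, 1; -1, 0] := rfl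

variable {H : Subgroup SL(2, R)} (hweyl : weyl ∈ H) (hH : ∀ r, shear ![1, 0] r ∈ H)

include hweyl hH

lemma shear_zero_one_mem (r : R) : shear ![0, 1] r ∈ H := by
  have hconj : weyl * shear ![1, 0] r * weyl⁻¹ = shear ![0, 1] r := by
    rw [conj_shear, ← shear_neg]
    simp [coe_weyl, -mulVec_cons]
  exact hconj ▸ mul_mem (mul_mem hweyl (hH r)) (inv_mem hweyl)

lemma mem_of_apply_one_one_eq_zero {g : SL(2, R)} (hg : g 1 1 = 0) : g ∈ H := by
  have hdet := det_fin_two g.1 ▸ g.2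
  rw [hg] at hdet
  have hfactor : g = shear ![1, 0] (-(g 0 0 * g 0 1)) *
      (shear ![1, 0] (g 0 1) * shear ![0, 1] (-g 1 0) * shear ![1, 0] (g 0 1)) := by
    ext i j
    fin_cases i <;> fin_cases j <;> simp [coe_shear, hg] <;> grind
  rw [hfactor]
  exact mul_mem (hH _) (mul_mem (mul_mem (hH _) (shear_zero_one_mem hweyl hH _)) (hH _))

lemma eq_top_of_division_of_isCoprime (φ : R → ℕ)
    (hφ : ∀ x y : R, IsCoprime x y → y ≠ 0 → ∃ q, φ (x - q * y) < φ y) : H = ⊤ := by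
  refine (Subgroup.eq_top_iff' H).mpr fun g => ?_
  induction hn : φ (g 1 1) using Nat.strong_induction_on generalizing g with
  | h n ih =>
    by_cases hzero : g 1 1 = 0
    · exact mem_of_apply_one_one_eq_zero hweyl hH hzero
    obtain ⟨q, hq⟩ := hφ (g 1 0) (g 1 1) (SpecialLinearGroup.isCoprime_row g 1) hzero
    have hmem : shear ![0, 1] q * weyl ∈ H := mul_mem (shear_zero_one_mem hweyl hH q) hweyl
    have hentry : (g * (shear ![0, 1] q * weyl) : SL(2, R)) 1 1 = g 1 0 - q * g 1 1 := by
      simp [coe_shear, coe_weyl, mul_apply]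
      ring
    exact (mul_mem_cancel_right hmem).mp (ih _ (by rwa [hentry, ← hn]) _ rfl)

end Generation

section NearestPoint

variable {K : Type*} [Field K] [LinearOrder K] [IsStrictOrderedRing K]

lemma abs_sq_sub_five_mul_sq_lt_one {a b : K} (ha : 0 ≤ a) (ha' : a ≤ 1 / 2) (hb : 0 ≤ b)
    (hb' : b ≤ 1 / 2) (hab : ¬(a = 1 / 2 ∧ b = 1 / 2)) :
    |a ^ 2 - 5 * b ^ 2| < 1 ∨ |(1 - a) ^ 2 - 5 * b ^ 2| < 1 := by
  simp only [abs_lt]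
  by_cases h : 5 * b ^ 2 < 1 + a ^ 2
  · left
    constructor <;> nlinarith
  · right
    have hsum : a + b < 1 := by grind
    constructor <;> nlinarith

variable [FloorRing K]

lemma exists_abs_sub_intCast_eq_one_sub (α : K) : ∃ s : ℤ, |α - s| = 1 - |α - round α| := by
  have hround := abs_sub_round α
  rcases abs_cases (α - round α) with ⟨habs, _⟩ | ⟨habs, _⟩
  · refine ⟨round α + 1, ?_⟩
    rw [abs_of_nonpos] <;> push_cast <;> linarith
  · refine ⟨round α - 1, ?_⟩
    rw [abs_of_nonneg] <;> push_cast <;> linarith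

lemma fract_eq_half_of_abs_sub_round_eq_half {α : K} (h : |α - round α| = 1 / 2) :
    Int.fract α = 1 / 2 := by
  rw [abs_sub_round_eq_min] at h
  rcases min_choice (Int.fract α) (1 - Int.fract α) with hmin | hmin <;> linarith

lemma exists_abs_sq_sub_five_mul_sq_lt_one {α β : K}
    (h : ¬(Int.fract α = 1 / 2 ∧ Int.fract β = 1 / 2)) :
    ∃ s t : ℤ, |(α - s) ^ 2 - 5 * (β - t) ^ 2| < 1 := by
  obtain ⟨s, hs⟩ := exists_abs_sub_intCast_eq_one_sub α
  have hround : ¬(|α - round α| = 1 / 2 ∧ |β - round β| = 1 / 2) :=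
    mt (And.imp fract_eq_half_of_abs_sub_round_eq_half fract_eq_half_of_abs_sub_round_eq_half) h
  rcases abs_sq_sub_five_mul_sq_lt_one (abs_nonneg _) (abs_sub_round α) (abs_nonneg _)
    (abs_sub_round β) hround with hlt | hlt
  · exact ⟨round α, round β, by simpa only [sq_abs] using hlt⟩
  · exact ⟨s, round β, by simpa only [← hs, sq_abs] using hlt⟩

end NearestPoint

section Division

lemma exists_odd_two_mul_eq_of_fract_div_eq_half {a n : ℤ} (hn : n ≠ 0)
    (h : Int.fract (a / n : ℚ) = 1 / 2) : ∃ k : ℤ, Odd k ∧ 2 * a = k * n := by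
  have hn' : (n : ℚ) ≠ 0 := Int.cast_ne_zero.mpr hn
  refine ⟨2 * ⌊(a / n : ℚ)⌋ + 1, odd_two_mul_add_one _, ?_⟩
  rw [Int.fract] at h
  generalize ⌊(a / n : ℚ)⌋ = k at *
  field_simp at h
  norm_cast at h
  linarith

lemma norm_sub_mul_eq {d : ℤ} {y : ℤ√d} (hy : y.norm ≠ 0) (x : ℤ√d) (s t : ℤ) :
    ((x - ⟨s, t⟩ * y).norm : ℚ) = y.norm *
      (((x * star y).re / y.norm - s) ^ 2 - d * ((x * star y).im / y.norm - t) ^ 2) := by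
  have hy' : (y.norm : ℚ) ≠ 0 := Int.cast_ne_zero.mpr hy
  field_simp
  norm_cast
  simp only [Zsqrtd.norm_def, Zsqrtd.re_mul, Zsqrtd.im_mul, Zsqrtd.re_sub, Zsqrtd.im_sub,
    Zsqrtd.re_star, Zsqrtd.im_star]
  ring

lemma five_ne_mul_self (n : ℤ) : 5 ≠ n * n := by
  intro h
  have hupper : n ≤ 2 := by nlinarith
  have hlower : -2 ≤ n := by nlinarith
  interval_cases n <;> lia

/-- Reduction modulo the prime ideal `(2, 1 + √5)`, the conductor of `ℤ[√5]`. -/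
def parity : R5 →+* ZMod 2 := Zsqrtd.lift ⟨1, by decide⟩

lemma parity_eq_zero_iff (z : R5) : parity z = 0 ↔ 2 ∣ z.re + z.im := by
  have hz : parity z = ((z.re + z.im : ℤ) : ZMod 2) := by simp [parity, Zsqrtd.lift]
  rw [hz, ZMod.intCast_zmod_eq_zero_iff_dvd, Nat.cast_ofNat]

lemma not_isCoprime_of_two_mul_eq_mul {x y z : R5} (hre : Odd z.re) (him : Odd z.im)
    (h : 2 * x = z * y) : ¬IsCoprime x y := by
  obtain ⟨m, hm⟩ := hre
  obtain ⟨n, hn⟩ := him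
  have h_re : 2 * x.re = (2 * m + 1) * y.re + 5 * (2 * n + 1) * y.im := by
    simpa [hm, hn] using congrArg Zsqrtd.re h
  have h_im : 2 * x.im = (2 * m + 1) * y.im + (2 * n + 1) * y.re := by
    simpa [hm, hn] using congrArg Zsqrtd.im h
  have hy : 2 ∣ y.re + y.im := ⟨x.im - m * y.im - n * y.re, by linarith⟩
  have hx : 2 ∣ x.re + x.im := by
    obtain ⟨c, hc⟩ := hy
    have hsum : x.re + x.im = (m + n + 1) * (y.re + y.im) + 2 * ((2 * n + 1) * y.im) := by
      linarith
    exact ⟨(m + n + 1) * c + (2 * n + 1) * y.im, by rw [hsum, hc]; ring⟩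
  intro hxy
  simpa [(parity_eq_zero_iff x).mpr hx, (parity_eq_zero_iff y).mpr hy] using hxy.map parity

lemma not_isCoprime_of_fract_eq_half {x y : R5} (hy : y.norm ≠ 0)
    (hre : Int.fract ((x * star y).re / y.norm : ℚ) = 1 / 2)
    (him : Int.fract ((x * star y).im / y.norm : ℚ) = 1 / 2) : ¬IsCoprime x y := by
  obtain ⟨k, hk, hre⟩ := exists_odd_two_mul_eq_of_fract_div_eq_half hy hre
  obtain ⟨l, hl, him⟩ := exists_odd_two_mul_eq_of_fract_div_eq_half hy him
  have hstar : 2 * (x * star y) = y.norm * ⟨k, l⟩ := by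
    rw [Zsqrtd.smul_val, mul_comm _ k, mul_comm _ l, ← hre, ← him]
    ext <;> simp
  refine not_isCoprime_of_two_mul_eq_mul (z := ⟨k, l⟩) hk hl
    (Zsqrtd.eq_of_smul_eq_smul_left hy ?_)
  linear_combination y * hstar + 2 * x * Zsqrtd.norm_eq_mul_conj y

lemma exists_natAbs_norm_sub_mul_lt {x y : R5} (hxy : IsCoprime x y) (hy : y ≠ 0) :
    ∃ q : R5, (x - q * y).norm.natAbs < y.norm.natAbs := by
  have hnorm : y.norm ≠ 0 := mt (Zsqrtd.norm_eq_zero five_ne_mul_self y).mp hy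
  obtain ⟨s, t, hst⟩ := exists_abs_sq_sub_five_mul_sq_lt_one fun h =>
    not_isCoprime_of_fract_eq_half hnorm h.1 h.2 hxy
  have hlt : |((x - ⟨s, t⟩ * y).norm : ℚ)| < |(y.norm : ℚ)| := by
    rw [norm_sub_mul_eq hnorm, abs_mul]
    exact mul_lt_of_lt_one_right (abs_pos.mpr (Int.cast_ne_zero.mpr hnorm)) (by exact_mod_cast hst)
  refine ⟨⟨s, t⟩, ?_⟩
  zify
  exact_mod_cast hlt

end Division

section Monodromy

/-- The monodromy group `Λ` of the Wiman–Edge pencil. -/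
def monodromyGroup : Subgroup SL2R5 := Subgroup.closure ({A, A', B, B'} : Set SL2R5)

/-- The transvection `P` with coefficient `1` along the common vector of `B` and `B'`. It
normalizes `Λ`, and its square lies in `Λ`. -/
def unitShear : SL2R5 := shear ![1, -1] 1

/-- The element `D = [[-1, 2], [-1, 1]]` of order four. It maps `(1, -1)` to `-(3, 2)`, and hence
preserves the line of `(1, -1)` modulo `√5`. -/
def turn : SL2R5 := shear ![1, 0] 1 * weyl * (shear ![1, 0] 1)⁻¹

/-- Six cosets of `H`. When `H` is the stabilizer of the line of `(1, -1)` modulo `√5`, the coset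
`g H` stands for the line of `g (1, -1)`: the first one for that of `(1, 0)`, and the one of
`shear ![1, 0] m` for that of `(m - 1, 1)`. -/
def lineCosets (H : Subgroup SL2R5) : Set (SL2R5 ⧸ H) :=
  insert ((weyl * shear ![1, 0] 1 : SL2R5) : SL2R5 ⧸ H)
    ((fun m : ℤ => ((shear ![1, 0] (m : R5) : SL2R5) : SL2R5 ⧸ H)) '' Set.Icc (-2) 2)

lemma A_mem : A ∈ monodromyGroup := Subgroup.subset_closure (by simp)

lemma A'_mem : A' ∈ monodromyGroup := Subgroup.subset_closure (by simp)

lemma B_mem : B ∈ monodromyGroup := Subgroup.subset_closure (by simp)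

lemma B'_mem : B' ∈ monodromyGroup := Subgroup.subset_closure (by simp)

lemma A_eq_shear : A = shear ![1, 0] sqrtd := by decide +kernel

lemma A'_eq_shear : A' = shear ![0, 1] sqrtd := by decide +kernel

lemma B_eq_shear : B = shear ![1, -1] (2 + sqrtd) := by decide +kernel

lemma B'_eq_shear : B' = shear ![1, -1] (sqrtd - 2) := by decide +kernel

lemma shear_five_mul_unitShear_mem : shear ![1, 0] 5 * unitShear ∈ monodromyGroup := by
  have hword : shear ![1, 0] 5 * unitShear = A⁻¹ * A⁻¹ * B' * A * A' * B' := by decide +kernel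
  rw [hword]
  apply_rules [mul_mem, inv_mem, A_mem, A'_mem, B'_mem]

lemma shear_one_neg_one_sqrtd_mem : shear ![1, -1] sqrtd ∈ monodromyGroup := by
  have hword : shear ![1, -1] sqrtd = A'⁻¹ * A⁻¹ * B' * A'⁻¹ * B * A⁻¹ * A'⁻¹ := by
    decide +kernel
  rw [hword]
  apply_rules [mul_mem, inv_mem, A_mem, A'_mem, B_mem, B'_mem]

lemma shear_one_one_sqrtd_mem : shear ![1, 1] sqrtd ∈ monodromyGroup := by
  have hword : shear ![1, 1] sqrtd = A⁻¹ * B' * A * B * A⁻¹ := by decide +kernel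
  rw [hword]
  apply_rules [mul_mem, inv_mem, A_mem, B_mem, B'_mem]

lemma shear_two_one_sqrtd_mem : shear ![2, 1] sqrtd ∈ monodromyGroup := by
  have hvec : (shear ![1, 0] 5 * unitShear).1 *ᵥ ![1, 1] = -![2, 1] := by decide +kernel
  have hmem := shear_five_mul_unitShear_mem
  rw [← shear_neg, ← hvec, ← conj_shear]
  exact mul_mem (mul_mem hmem shear_one_one_sqrtd_mem) (inv_mem hmem)

lemma unitShear_sq_mem : unitShear ^ 2 ∈ monodromyGroup := by
  have hword : unitShear ^ 2 = B * (shear ![1, -1] sqrtd)⁻¹ := by decide +kernel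
  exact hword ▸ mul_mem B_mem (inv_mem shear_one_neg_one_sqrtd_mem)

lemma unitShear_conj_mem {x : SL2R5} (hx : x ∈ ({A, A', B, B'} : Set SL2R5)) :
    unitShear * x * unitShear⁻¹ ∈ monodromyGroup := by
  rcases hx with rfl | rfl | rfl | rfl
  · have hA : unitShear * A * unitShear⁻¹ = unitShear ^ 2 * A' * (unitShear ^ 2)⁻¹ := by
      decide +kernel
    exact hA ▸ mul_mem (mul_mem unitShear_sq_mem A'_mem) (inv_mem unitShear_sq_mem)
  · have hA' : unitShear * A' * unitShear⁻¹ = A := by decide +kernel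
    exact hA' ▸ A_mem
  · have hB : unitShear * B * unitShear⁻¹ = B := by decide +kernel
    exact hB ▸ B_mem
  · have hB' : unitShear * B' * unitShear⁻¹ = B' := by decide +kernel
    exact hB' ▸ B'_mem

lemma turn_pow_four : turn ^ 4 = 1 := by decide +kernel

end Monodromy

section Overgroup

variable {H : Subgroup SL2R5} (hH : monodromyGroup ≤ H) (hunit : unitShear ∈ H)

include hH hunit

lemma shear_one_neg_one_mem (r : R5) : shear ![1, -1] r ∈ H :=
  shear_mem_of_dvd_re (n := 1) (by rwa [Int.cast_one]) (hH shear_one_neg_one_sqrtd_mem)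
    (one_dvd _)

/-- Up to the unit `2 + √5`, the vectors `turn (1, -1) = -(3, 2)` and `(A B⁻¹ A⁻¹) (1, -1)` agree,
so `turn` may be replaced by an element of `Λ` at the cost of rescaling the coefficient. -/
lemma turn_conj_shear_one_neg_one_mem (r : R5) : turn * shear ![1, -1] r * turn⁻¹ ∈ H := by
  have hturn : turn.1 *ᵥ ![1, -1] = -![3, 2] := by decide +kernel
  have hword : (A * B⁻¹ * A⁻¹).1 *ᵥ ![1, -1] = (2 + sqrtd : R5) • ![3, 2] := by decide +kernel
  have hscale : (2 + sqrtd : R5) ^ 2 * (9 - 4 * sqrtd) = 1 := by decide +kernel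
  have hconj : turn * shear ![1, -1] r * turn⁻¹ =
      A * B⁻¹ * A⁻¹ * shear ![1, -1] ((9 - 4 * sqrtd) * r) * (A * B⁻¹ * A⁻¹)⁻¹ := by
    rw [conj_shear, conj_shear, hturn, hword, shear_neg, shear_smul, ← mul_assoc, hscale, one_mul]
  have hmem : A * B⁻¹ * A⁻¹ ∈ H := hH (mul_mem (mul_mem A_mem (inv_mem B_mem)) (inv_mem A_mem))
  rw [hconj]
  exact mul_mem (mul_mem hmem (shear_one_neg_one_mem hH hunit _)) (inv_mem hmem)

lemma turn_conj_mem {x : SL2R5} (hx : x ∈ (insert unitShear {A, A', B, B'} : Set SL2R5)) :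
    turn * x * turn⁻¹ ∈ H := by
  have hA : turn.1 *ᵥ ![1, 0] = -![1, 1] := by decide +kernel
  have hA' : turn.1 *ᵥ ![0, 1] = ![2, 1] := by decide +kernel
  rcases hx with rfl | rfl | rfl | rfl | rfl
  · exact turn_conj_shear_one_neg_one_mem hH hunit 1
  · rw [A_eq_shear, conj_shear, hA, shear_neg]
    exact hH shear_one_one_sqrtd_mem
  · rw [A'_eq_shear, conj_shear, hA']
    exact hH shear_two_one_sqrtd_mem
  · rw [B_eq_shear]
    exact turn_conj_shear_one_neg_one_mem hH hunit _
  · rw [B'_eq_shear]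
    exact turn_conj_shear_one_neg_one_mem hH hunit _

lemma shear_one_zero_mem {r : R5} (hr : 5 ∣ r.re) : shear ![1, 0] r ∈ H :=
  shear_mem_of_dvd_re
    ((mul_mem_cancel_right hunit).mp (hH shear_five_mul_unitShear_mem))
    (A_eq_shear ▸ hH A_mem) hr

lemma mk_mem_lineCosets {g h : SL2R5} {r : R5} (hh : h ∈ H) (hg : g = shear ![1, 0] r * h) :
    (g : SL2R5 ⧸ H) ∈ lineCosets H := by
  refine Or.inr ⟨r.re.bmod 5, Set.mem_Icc.mpr (by lia), ?_⟩
  rw [hg, QuotientGroup.mk_mul_of_mem _ hh, QuotientGroup.eq, inv_shear, ← shear_add]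
  refine shear_one_zero_mem hH hunit ?_
  simp only [Zsqrtd.re_add, Zsqrtd.re_neg, Zsqrtd.re_intCast]
  lia

lemma shear_smul_mem_lineCosets (r : R5) {x : SL2R5 ⧸ H} (hx : x ∈ lineCosets H) :
    shear ![1, 0] r • x ∈ lineCosets H := by
  rcases hx with rfl | ⟨m, -, rfl⟩
  · have hvec : (weyl * shear ![1, 0] 1 : SL2R5).1 *ᵥ ![1, -1] = -![1, 0] := by decide +kernel
    have hconj := conj_shear (weyl * shear ![1, 0] 1 : SL2R5) ![1, -1] r
    rw [hvec, shear_neg, mul_inv_eq_iff_eq_mul] at hconj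
    left
    change ((shear ![1, 0] r * (weyl * shear ![1, 0] 1) : SL2R5) : SL2R5 ⧸ H) = _
    rw [← hconj, QuotientGroup.mk_mul_of_mem _ (shear_one_neg_one_mem hH hunit r)]
  · exact mk_mem_lineCosets hH hunit (r := r + m) (one_mem H)
      ((shear_add _ r m).symm.trans (mul_one _).symm)

lemma weyl_smul_mem_lineCosets (hturn : turn ∈ H) {x : SL2R5 ⧸ H} (hx : x ∈ lineCosets H) :
    (weyl : SL2R5) • x ∈ lineCosets H := by
  have hmk := @mk_mem_lineCosets H hH hunit
  rcases hx with rfl | ⟨m, ⟨hm, hm'⟩, rfl⟩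
  · exact hmk (r := 1) (pow_mem hturn 2) (by decide +kernel)
  interval_cases m
  · exact hmk (r := -2) (mul_mem (inv_mem hturn) (inv_mem (hH shear_five_mul_unitShear_mem)))
      (by decide +kernel)
  · exact hmk (r := -1) hturn (by decide +kernel)
  · exact hmk (r := 2) hunit (by decide +kernel)
  · exact Or.inl rfl
  · exact hmk (r := 0) (mul_mem (pow_mem hturn 2) (inv_mem hunit)) (by decide +kernel)

lemma finiteIndex_of_turn_mem (hturn : turn ∈ H) : H.FiniteIndex := by
  have hgen : Subgroup.closure (insert weyl (Set.range (shear ![1, 0]))) = (⊤ : Subgroup SL2R5) :=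
    eq_top_of_division_of_isCoprime (Subgroup.subset_closure (by simp))
      (fun r => Subgroup.subset_closure (by simp)) (fun x => x.norm.natAbs)
      fun _ _ => exists_natAbs_norm_sub_mul_lt
  have hfin : (lineCosets H).Finite := ((Set.finite_Icc _ _).image _).insert _
  have : Finite (SL2R5 ⧸ H) := by
    refine finite_of_smul_mem hgen hfin (Set.insert_nonempty _ _) ?_
    rintro _ (rfl | ⟨r, rfl⟩) x hx
    · exact weyl_smul_mem_lineCosets hH hunit hturn hx
    · exact shear_smul_mem_lineCosets hH hunit r hx
  exact Subgroup.finiteIndex_of_finite_quotient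

end Overgroup

end WimanEdge

/-- **Arithmeticity of the monodromy of the Wiman–Edge pencil** (concrete form):
the subgroup of `SL₂(ℤ[√5])` generated by the four monodromy matrices
`A, A′, B, B′` has finite index in `SL₂(ℤ[√5])`. -/
theorem monodromy_finiteIndex :
    (Subgroup.closure ({A, A', B, B'} : Set SL2R5)).FiniteIndex := by
  refine WimanEdge.finiteIndex_closure_of_insert (g := WimanEdge.unitShear) two_ne_zero
    WimanEdge.unitShear_sq_mem (fun _ => WimanEdge.unitShear_conj_mem) ?_
  have hle := Subgroup.closure_mono (Set.subset_insert WimanEdge.unitShear {A, A', B, B'})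
  have hunit := Subgroup.subset_closure (Set.mem_insert WimanEdge.unitShear {A, A', B, B'})
  refine WimanEdge.finiteIndex_closure_of_insert (g := WimanEdge.turn) four_ne_zero
    (WimanEdge.turn_pow_four ▸ one_mem _) (fun _ => WimanEdge.turn_conj_mem hle hunit) ?_
  have hle' := Subgroup.closure_mono
    (Set.subset_insert WimanEdge.turn (insert WimanEdge.unitShear {A, A', B, B'}))
  exact WimanEdge.finiteIndex_of_turn_mem (hle.trans hle') (hle' hunit)
    (Subgroup.subset_closure (Set.mem_insert _ _))
end

section
/- Let L ⊆ R² be an R-submodule such that L ≠ 0, L ≠ R², and the quotient R²/L is torsion-free as an abelian group (i.e. for every v ∈ R² and every nonzero integer n, if n·v ∈ L then v ∈ L). Then there exists g ∈ SL₂(R) such that the image of L under v ↦ g·v equals either R × {0}, or the ℤ-span L_X of the two vectors (2, 1+√5) and (1+√5, 3+√5) (which is itself an R-submodule of R²). (Thus SL₂(ℤ[√5]) has exactly two cusps, ∞₀ and ∞_X.) -/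
/-- The cusp-module of type `∞₀`: the first summand `R × {0}` of `R²`. -/
def cusp0 : Submodule R5 (Fin 2 → R5) := Submodule.span R5 {![1, 0]}

/-- The cusp-module of type `∞_X`: the `R`-submodule generated by `(2, 1+√5)` and
`(1+√5, 3+√5)` (the image of `a ↦ (2a, 2Xa)`, `a ∈ 𝒪`). -/
def cuspX : Submodule R5 (Fin 2 → R5) :=
  Submodule.span R5 {![2, 1 + Zsqrtd.sqrtd], ![1 + Zsqrtd.sqrtd, 3 + Zsqrtd.sqrtd]}

open Matrix Module

open scoped MatrixGroups

section TorsionFreeQuotient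

lemma isTorsionFree_quotient_iff {S R M : Type*} [Ring S] [IsDomain S] [Ring R] [AddCommGroup M]
    [Module R M] [Module S M] [SMul S R] [IsScalarTower S R M] {L : Submodule R M} :
    IsTorsionFree S (M ⧸ L) ↔ ∀ (v : M) (c : S), c ≠ 0 → c • v ∈ L → v ∈ L := by
  simp_rw [isTorsionFree_iff_smul_eq_zero, ← Submodule.Quotient.mk_eq_zero L,
    Submodule.Quotient.mk_smul, (Submodule.Quotient.mk_surjective L).forall, or_iff_not_imp_left]
  exact ⟨fun h v c hc hv ↦ h c v hv hc, fun h c v hv hc ↦ h v c hc hv⟩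

lemma zsqrtd_norm_ne_zero_of_isRegular {d : ℤ} {r : ℤ√d} (hr : IsRegular r) : r.norm ≠ 0 := by
  intro h
  have hconj : r * star r = 0 := by rw [← Zsqrtd.norm_eq_mul_conj, h, Int.cast_zero]
  exact hr.ne_zero (star_eq_zero.mp (hr.left.mul_left_eq_zero_iff.mp hconj))

lemma isTorsionFree_zsqrtd_of_int {d : ℤ} {M : Type*} [AddCommGroup M] [Module (ℤ√d) M]
    [IsTorsionFree ℤ M] : IsTorsionFree (ℤ√d) M where
  isSMulRegular r hr := by
    refine isSMulRegular_iff_right_eq_zero_of_smul.mpr fun m hm ↦ ?_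
    refine (smul_eq_zero_iff_right (zsqrtd_norm_ne_zero_of_isRegular hr)).mp ?_
    rw [← Int.cast_smul_eq_zsmul (ℤ√d), Zsqrtd.norm_eq_mul_conj, mul_comm, mul_smul, hm, smul_zero]

end TorsionFreeQuotient

section LineThrough

variable {R : Type*} [CommRing R] {u v w : Fin 2 → R}

/-- The vectors of `R²` that are collinear with `w`. For a domain `R` with fraction field `K` and
`w ≠ 0`, this is the intersection of `R²` with the line `K w`. -/
def lineThrough (w : Fin 2 → R) : Submodule R (Fin 2 → R) :=
  LinearMap.ker (w 0 • LinearMap.proj 1 - w 1 • LinearMap.proj 0 : (Fin 2 → R) →ₗ[R] R)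

lemma mem_lineThrough : u ∈ lineThrough w ↔ w 0 * u 1 = w 1 * u 0 := by
  simp [lineThrough, sub_eq_zero]

lemma mem_lineThrough_comm : u ∈ lineThrough w ↔ w ∈ lineThrough u := by
  rw [mem_lineThrough, mem_lineThrough, eq_comm, mul_comm (u 0), mul_comm (u 1)]

lemma smul_eq_smul_of_mem_lineThrough (h : u ∈ lineThrough w) (i : Fin 2) :
    w i • u = u i • w := by
  rw [mem_lineThrough] at h
  ext j
  fin_cases i <;> fin_cases j <;> simp <;> grind

lemma specialLinearGroup_smul_apply (g : SL(2, R)) (v : Fin 2 → R) (i : Fin 2) :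
    (g • v) i = g i 0 * v 0 + g i 1 * v 1 := by
  change (g.val *ᵥ v) i = _
  rw [mulVec, dotProduct, Fin.sum_univ_two]

lemma smul_mem_lineThrough_smul_iff (g : SL(2, R)) :
    g • u ∈ lineThrough (g • w) ↔ u ∈ lineThrough w := by
  have hdet := g.det_coe
  rw [det_fin_two] at hdet
  have hdet_smul : (g • w) 0 * (g • u) 1 - (g • w) 1 * (g • u) 0 = w 0 * u 1 - w 1 * u 0 := by
    simp only [specialLinearGroup_smul_apply]
    linear_combination (w 0 * u 1 - w 1 * u 0) * hdet
  rw [mem_lineThrough, mem_lineThrough, ← sub_eq_zero, hdet_smul, sub_eq_zero]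

lemma map_mulVecLin_lineThrough (g : SL(2, R)) (w : Fin 2 → R) :
    (lineThrough w).map g.val.mulVecLin = lineThrough (g • w) := by
  ext u
  rw [Submodule.mem_map]
  constructor
  · rintro ⟨v, hv, rfl⟩
    exact (smul_mem_lineThrough_smul_iff g).mpr hv
  · intro hu
    refine ⟨g⁻¹ • u, ?_, smul_inv_smul g u⟩
    rwa [← smul_mem_lineThrough_smul_iff g, smul_inv_smul]

variable [IsDomain R]

instance isTorsionFree_quotient_lineThrough : IsTorsionFree R ((Fin 2 → R) ⧸ lineThrough w) := by
  refine isTorsionFree_quotient_iff.mpr fun v c hc h ↦ ?_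
  simp only [mem_lineThrough, Pi.smul_apply, smul_eq_mul] at h ⊢
  apply mul_left_cancel₀ hc
  linear_combination h

variable {L : Submodule R (Fin 2 → R)} [IsTorsionFree R ((Fin 2 → R) ⧸ L)]

lemma lineThrough_le_of_mem (hw : w ∈ L) (hw0 : w ≠ 0) : lineThrough w ≤ L := by
  intro u hu
  obtain ⟨i, hi⟩ := Function.ne_iff.mp hw0
  refine isTorsionFree_quotient_iff.mp ‹_› u (w i) hi ?_
  rw [smul_eq_smul_of_mem_lineThrough hu]
  exact L.smul_mem _ hw

lemma le_lineThrough_of_mem (hL : L ≠ ⊤) (hw : w ∈ L) : L ≤ lineThrough w := by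
  intro v hv
  by_contra hvw
  refine hL (eq_top_iff.mpr fun u _ ↦ ?_)
  have hdet : w 0 * v 1 - w 1 * v 0 ≠ 0 := sub_ne_zero.mpr (mem_lineThrough.not.mp hvw)
  refine isTorsionFree_quotient_iff.mp ‹_› u _ hdet ?_
  have cramer : (w 0 * v 1 - w 1 * v 0) • u =
      (u 0 * v 1 - u 1 * v 0) • w + (w 0 * u 1 - w 1 * u 0) • v := by
    ext i
    fin_cases i <;> simp <;> ring
  rw [cramer]
  exact L.add_mem (L.smul_mem _ hw) (L.smul_mem _ hv)

lemma eq_lineThrough_of_mem (hL : L ≠ ⊤) (hw : w ∈ L) (hw0 : w ≠ 0) : L = lineThrough w :=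
  (le_lineThrough_of_mem hL hw).antisymm (lineThrough_le_of_mem hw hw0)

lemma lineThrough_eq_of_mem (hv : v ∈ lineThrough w) (hv0 : v ≠ 0) (hw0 : w ≠ 0) :
    lineThrough v = lineThrough w :=
  (lineThrough_le_of_mem hv hv0).antisymm (lineThrough_le_of_mem (mem_lineThrough_comm.mp hv) hw0)

end LineThrough

section EuclideanAlgorithm

variable {R : Type*} [CommRing R]

/-- One step of the Euclidean algorithm, with quotient `q`: it sends `(a, b)` to `(b, q b - a)`. -/
def euclidStep (q : R) : SL(2, R) := ⟨!![0, 1; -1, q], by simp [det_fin_two_of]⟩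

lemma euclidStep_smul (q : R) (v : Fin 2 → R) :
    euclidStep q • v = ![v 1, q * v 1 - v 0] := by
  ext i
  rw [specialLinearGroup_smul_apply]
  fin_cases i
  · simp [euclidStep]
  · simp [euclidStep, neg_add_eq_sub]

lemma exists_smul_mem_of_euclidStep (N : R → ℕ) {E : Set (Fin 2 → R)}
    (hN : ∀ v : Fin 2 → R, v 1 ≠ 0 → ∃ q, N (q * v 1 - v 0) < N (v 1) ∨ euclidStep q • v ∈ E)
    (v : Fin 2 → R) : ∃ g : SL(2, R), (g • v) 1 = 0 ∨ g • v ∈ E := by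
  induction h : N (v 1) using Nat.strong_induction_on generalizing v with
  | _ n ih =>
    subst h
    by_cases hv : v 1 = 0
    · exact ⟨1, .inl (by rwa [one_smul])⟩
    obtain ⟨q, hlt | hE⟩ := hN v hv
    · obtain ⟨g, hg⟩ := ih _ hlt (euclidStep q • v) (by simp [euclidStep_smul])
      exact ⟨g * euclidStep q, by rwa [mul_smul]⟩
    · exact ⟨_, .inr hE⟩

end EuclideanAlgorithm

section NearestIntegers

lemma exists_int_sub_eq_half {K : Type*} [Field K] [CharZero K] {x : K} {m : ℤ}
    (h : (m - x) ^ 2 = 1 / 4) : ∃ n : ℤ, n - x = 1 / 2 := by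
  have hsq : (m - x) ^ 2 = (1 / 2) ^ 2 := by
    rw [h]
    norm_num
  rcases sq_eq_sq_iff_eq_or_eq_neg.mp hsq with h | h
  · exact ⟨m, h⟩
  · exact ⟨m + 1, by push_cast; linear_combination h + add_halves (1 : K)⟩

variable {K : Type*} [Field K] [LinearOrder K] [IsStrictOrderedRing K] [FloorRing K]

lemma sq_round_sub_le (x : K) : (round x - x) ^ 2 ≤ 1 / 4 := by
  have h := sq_le_sq' (neg_le_of_abs_le (abs_sub_round x)) (le_of_abs_le (abs_sub_round x))
  linarith

lemma exists_int_sq_sub_mem_Icc (x : K) : ∃ m : ℤ, (m - x) ^ 2 ∈ Set.Icc (1 / 4) 1 := by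
  have h0 := Int.fract_nonneg x
  have h1 := Int.fract_lt_one x
  have hx := Int.floor_add_fract x
  rcases le_total (1 / 2) (Int.fract x) with h | h
  · refine ⟨⌊x⌋, ?_⟩
    rw [show (⌊x⌋ : K) - x = -Int.fract x by linear_combination hx]
    constructor <;> nlinarith
  · refine ⟨⌊x⌋ + 1, ?_⟩
    rw [show ((⌊x⌋ + 1 : ℤ) : K) - x = 1 - Int.fract x by push_cast; linear_combination hx]
    constructor <;> nlinarith

lemma exists_int_abs_sq_sub_five_mul_sq_lt_one (x y : K) :
    ∃ m k : ℤ, |(m - x) ^ 2 - 5 * (k - y) ^ 2| < 1 ∨ (m - x = 1 / 2 ∧ k - y = 1 / 2) := by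
  have hk := sq_round_sub_le y
  rcases lt_or_ge (5 * (round y - y) ^ 2) 1 with hsmall | hlarge
  · have hm := sq_round_sub_le x
    refine ⟨round x, round y, .inl (abs_lt.mpr ⟨?_, ?_⟩)⟩
    · linarith [sq_nonneg (round x - x)]
    · linarith [sq_nonneg (round y - y)]
  · obtain ⟨m, hm_ge, hm_le⟩ := exists_int_sq_sub_mem_Icc x
    -- `(m - x)² - 5 (round y - y)²` lies in `[-1, 0]`, and is `-1` only if both squares are
    -- `1 / 4`.
    rcases lt_or_ge (-1) ((m - x) ^ 2 - 5 * (round y - y) ^ 2) with hlt | hle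
    · exact ⟨m, round y, .inl (abs_lt.mpr ⟨hlt, by linarith⟩)⟩
    · obtain ⟨m', hm'⟩ := exists_int_sub_eq_half (x := x) (m := m) (by linarith)
      obtain ⟨k', hk'⟩ := exists_int_sub_eq_half (x := y) (m := round y) (by linarith)
      exact ⟨m', k', .inr ⟨hm', hk'⟩⟩

end NearestIntegers

section NearEuclideanDivision

/-- `a / b = x + y √d` in `ℚ(√d)`. It is written without denominators, as `a = (x + y √d) b`, so
that `ℚ(√d)` itself is not needed. -/
def IsRatQuotient {d : ℤ} (a b : ℤ√d) (x y : ℚ) : Prop :=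
  a.re = x * b.re + d * y * b.im ∧ a.im = x * b.im + y * b.re

section IsRatQuotient

variable {d : ℤ} {a b : ℤ√d} {x y : ℚ}

lemma exists_isRatQuotient (a : ℤ√d) (hb : b.norm ≠ 0) : ∃ x y : ℚ, IsRatQuotient a b x y := by
  have hb' : (b.norm : ℚ) ≠ 0 := Int.cast_ne_zero.mpr hb
  have hnorm : (b.norm : ℚ) = b.re * b.re - d * b.im * b.im := by
    rw [Zsqrtd.norm_def]
    push_cast
    rfl
  refine ⟨(a * star b).re / b.norm, (a * star b).im / b.norm, ?_, ?_⟩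
  all_goals
    simp only [Zsqrtd.re_mul, Zsqrtd.im_mul, Zsqrtd.re_star, Zsqrtd.im_star]
    field_simp
    rw [hnorm]
    push_cast
    ring

lemma IsRatQuotient.mul_sub (h : IsRatQuotient a b x y) (q : ℤ√d) :
    IsRatQuotient (q * b - a) b (q.re - x) (q.im - y) := by
  constructor
  · push_cast [Zsqrtd.re_sub, Zsqrtd.re_mul, h.1]
    ring
  · push_cast [Zsqrtd.im_sub, Zsqrtd.im_mul, h.2]
    ring

lemma IsRatQuotient.norm_eq (h : IsRatQuotient a b x y) :
    (a.norm : ℚ) = (x ^ 2 - d * y ^ 2) * b.norm := by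
  push_cast [Zsqrtd.norm_def, h.1, h.2]
  ring

lemma IsRatQuotient.two_mul_eq (h : IsRatQuotient a b (1 / 2) (1 / 2)) :
    2 * a = (1 + Zsqrtd.sqrtd) * b := by
  have hre : 2 * a.re = b.re + d * b.im := by
    qify
    linear_combination 2 * h.1
  have him : 2 * a.im = b.re + b.im := by
    qify
    linear_combination 2 * h.2
  ext
  · simpa using hre
  · simpa [add_comm] using him

end IsRatQuotient

lemma five_ne_mul_self (n : ℤ) : 5 ≠ n * n := by
  intro h
  have hlt : n < 3 := by nlinarith
  have hgt : -3 < n := by nlinarith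
  interval_cases n <;> omega

instance isDomain_R5 : IsDomain R5 :=
  have : Zsqrtd.Nonsquare 5 := ⟨fun n ↦ mod_cast five_ne_mul_self n⟩
  inferInstanceAs (IsDomain (ℤ√((5 : ℕ) : ℤ)))

lemma exists_natAbs_norm_mul_sub_lt (a : R5) {b : R5} (hb : b ≠ 0) :
    ∃ q : R5, (q * b - a).norm.natAbs < b.norm.natAbs ∨
      2 * (q * b - a) = (1 + Zsqrtd.sqrtd) * b := by
  have hN : b.norm ≠ 0 := (Zsqrtd.norm_eq_zero five_ne_mul_self b).not.mpr hb
  obtain ⟨x, y, hxy⟩ := exists_isRatQuotient a hN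
  obtain ⟨m, k, hlt | ⟨hm, hk⟩⟩ := exists_int_abs_sq_sub_five_mul_sq_lt_one x y
  · refine ⟨⟨m, k⟩, .inl ?_⟩
    have habs : |((⟨m, k⟩ * b - a : R5).norm : ℚ)| < |(b.norm : ℚ)| := by
      rw [(hxy.mul_sub ⟨m, k⟩).norm_eq, abs_mul]
      exact mul_lt_of_lt_one_left (abs_pos.mpr (Int.cast_ne_zero.mpr hN)) (mod_cast hlt)
    zify
    exact_mod_cast habs
  · refine ⟨⟨m, k⟩, .inr (IsRatQuotient.two_mul_eq ?_)⟩
    simpa only [hm, hk] using hxy.mul_sub ⟨m, k⟩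

end NearEuclideanDivision

section Cusps

lemma exists_smul_mem_lineThrough (v : Fin 2 → R5) :
    ∃ g : SL2R5, g • v ∈ lineThrough ![1, 0] ∨ g • v ∈ lineThrough ![2, 1 + Zsqrtd.sqrtd] := by
  have hdiv (u : Fin 2 → R5) (hu : u 1 ≠ 0) : ∃ q,
      (q * u 1 - u 0).norm.natAbs < (u 1).norm.natAbs ∨
        euclidStep q • u ∈ lineThrough ![2, 1 + Zsqrtd.sqrtd] := by
    simpa [mem_lineThrough, euclidStep_smul] using exists_natAbs_norm_mul_sub_lt (u 0) hu
  obtain ⟨g, hg⟩ := exists_smul_mem_of_euclidStep (fun r : R5 ↦ r.norm.natAbs) hdiv v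
  exact ⟨g, hg.imp_left fun h ↦ by simp [mem_lineThrough, h]⟩

lemma cusp0_eq_lineThrough : cusp0 = lineThrough ![1, 0] := by
  ext u
  rw [cusp0, Submodule.mem_span_singleton, mem_lineThrough]
  constructor
  · rintro ⟨a, rfl⟩
    simp
  · intro hu
    refine ⟨u 0, ?_⟩
    ext1 i
    fin_cases i
    · simp
    · simpa using hu.symm

lemma mem_span_int_of_mem_lineThrough {u : Fin 2 → R5}
    (hu : u ∈ lineThrough ![2, 1 + Zsqrtd.sqrtd]) :
    u ∈ Submodule.span ℤ
      ({![2, 1 + Zsqrtd.sqrtd], ![1 + Zsqrtd.sqrtd, 3 + Zsqrtd.sqrtd]} : Set (Fin 2 → R5)) := by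
  rw [mem_lineThrough] at hu
  have hre := congrArg Zsqrtd.re hu
  have him := congrArg Zsqrtd.im hu
  simp only [cons_val_zero, cons_val_one, Zsqrtd.re_mul, Zsqrtd.im_mul, Zsqrtd.re_add,
    Zsqrtd.im_add, Zsqrtd.re_one, Zsqrtd.im_one, Zsqrtd.re_sqrtd, Zsqrtd.im_sqrtd, Zsqrtd.re_ofNat,
    Zsqrtd.im_ofNat, Nat.cast_ofNat] at hre him
  refine Submodule.mem_span_pair.mpr ⟨(u 1).im - (u 0).im, (u 0).im, ?_⟩
  ext i
  · fin_cases i <;> simp <;> linarith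
  · fin_cases i <;> simp

lemma cuspX_le_lineThrough : cuspX ≤ lineThrough ![2, 1 + Zsqrtd.sqrtd] := by
  have hsqrtd : (Zsqrtd.sqrtd * Zsqrtd.sqrtd : R5) = 5 := Zsqrtd.dmuld
  rw [cuspX, Submodule.span_le, Set.pair_subset_iff, SetLike.mem_coe, SetLike.mem_coe,
    mem_lineThrough, mem_lineThrough]
  constructor
  · simp [mul_comm]
  · simp only [cons_val_zero, cons_val_one]
    linear_combination -hsqrtd

lemma coe_cuspX_eq_span_int :
    (cuspX : Set (Fin 2 → R5)) = Submodule.span ℤ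
      ({![2, 1 + Zsqrtd.sqrtd], ![1 + Zsqrtd.sqrtd, 3 + Zsqrtd.sqrtd]} : Set (Fin 2 → R5)) :=
  Set.Subset.antisymm (fun _ hu ↦ mem_span_int_of_mem_lineThrough (cuspX_le_lineThrough hu))
    (Submodule.span_subset_span ℤ R5 _)

lemma cuspX_eq_lineThrough : cuspX = lineThrough ![2, 1 + Zsqrtd.sqrtd] :=
  cuspX_le_lineThrough.antisymm fun _ hu ↦
    Submodule.span_subset_span ℤ R5 _ (mem_span_int_of_mem_lineThrough hu)

end Cusps

/-- **`SL₂(ℤ[√5])` has exactly two cusps.** The submodule `cuspX` coincides with the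
`ℤ`-span of `(2, 1+√5)` and `(1+√5, 3+√5)` (so that `ℤ`-span is itself an `R`-submodule),
and every nonzero proper `R`-submodule `L ⊆ R²` with torsion-free quotient is carried by
some `g ∈ SL₂(ℤ[√5])` onto either `R × {0}` or `cuspX`. -/
theorem two_cusps (L : Submodule R5 (Fin 2 → R5)) (hbot : L ≠ ⊥) (htop : L ≠ ⊤)
    (htf : ∀ (v : Fin 2 → R5) (n : ℤ), n ≠ 0 → n • v ∈ L → v ∈ L) :
    (cuspX : Set (Fin 2 → R5))
        = (Submodule.span ℤ
            ({![2, 1 + Zsqrtd.sqrtd], ![1 + Zsqrtd.sqrtd, 3 + Zsqrtd.sqrtd]} :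
              Set (Fin 2 → R5)) : Set (Fin 2 → R5)) ∧
    ∃ g : SL2R5,
      Submodule.map (Matrix.mulVecLin g.val) L = cusp0 ∨
      Submodule.map (Matrix.mulVecLin g.val) L = cuspX := by
  refine ⟨coe_cuspX_eq_span_int, ?_⟩
  have : IsTorsionFree ℤ ((Fin 2 → R5) ⧸ L) := isTorsionFree_quotient_iff.mpr htf
  have : IsTorsionFree R5 ((Fin 2 → R5) ⧸ L) := isTorsionFree_zsqrtd_of_int
  obtain ⟨v, hv, hv0⟩ := L.ne_bot_iff.mp hbot
  obtain ⟨g, hg⟩ := exists_smul_mem_lineThrough v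
  have hgv0 : g • v ≠ 0 := (smul_ne_zero_iff_ne g).mpr hv0
  refine ⟨g, ?_⟩
  rw [eq_lineThrough_of_mem htop hv hv0, map_mulVecLin_lineThrough, cusp0_eq_lineThrough,
    cuspX_eq_lineThrough]
  exact hg.imp (lineThrough_eq_of_mem · hgv0 (by simp)) (lineThrough_eq_of_mem · hgv0 (by simp))
end

section
/- Suppose p, q ∈ ℤ are not both zero, and let λ := p·id + q·(2X − 3·id), an endomorphism of V preserving E₀. Assume that s(λx, y) ∈ {−1, 0, 1} for all x ∈ Δ_ir and y ∈ Δ_c, and that at most three of the six basis vectors b ∈ {e, e₀, e₁, e₂, e₃, e₄} satisfy s(λb, e + e₀ + e₁) ≠ 0. Then (p,q) = (±1, 0) or (p,q) = (0, ±1); that is, λ = ±id or λ = ±(2X − 3·id). -/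
/-- Index type for the basis `e, e₀, …, e₄` of `V`: `none ↦ e`, `some i ↦ eᵢ`. -/
abbrev J5 := Option (ZMod 5)

/-- The 6-dimensional `ℚ`-vector space `V` with basis indexed by `J5`. -/
abbrev V := J5 → ℚ

/-- The basis vector of `V` with index `j`. -/
def bvec : J5 → V := fun j => Pi.single j 1

/-- The basis vector `e`. -/
def eV : V := Pi.single none 1

/-- The basis vectors `eᵢ`, `i ∈ ℤ/5`. -/
def ee (i : ZMod 5) : V := Pi.single (some i) 1

/-- The symmetric bilinear form on `V` for which the basis `e, e₀, …, e₄` is orthonormal. -/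
def sform (x y : V) : ℚ := ∑ j : J5, x j * y j

/-- `ε = ½(e + e₀ + e₁ + e₂ + e₃ + e₄)`. -/
def eps : V := (1 / 2 : ℚ) • (eV + ∑ i : ZMod 5, ee i)

/-- The `ℚ`-linear map `X : V → V` determined by `X(e) = ε` and
`X(eᵢ) = ε − e_{i+2} − e_{i−2}` (indices mod 5); in coordinates,
`(X x)(j) = (Σ_t x_t)/2`, minus `x_{k−2} + x_{k+2}` when `j = some k`. -/
def Xmap : V →ₗ[ℚ] V where
  toFun x := fun j =>
    (∑ t : J5, x t) / 2 +
      (match j with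
        | none => 0
        | some k => -(x (some (k - 2))) - x (some (k + 2)))
  map_add' x y := by
    funext j
    rcases j with _ | k <;> simp [Finset.sum_add_distrib] <;> ring
  map_smul' c x := by
    funext j
    have hs : (∑ i : ZMod 5, c * x (some i)) = c * ∑ i : ZMod 5, x (some i) :=
      (Finset.mul_sum _ _ _).symm
    rcases j with _ | k <;> simp <;> rw [hs] <;> ring

/-- `Δ_ir = {±e, ±e₀, …, ±e₄}`. -/
def DeltaIr : Set V := {x | x = eV ∨ x = -eV ∨ ∃ i : ZMod 5, x = ee i ∨ x = -ee i}

/-- `Δ_c = {±(e + eᵢ + e_{i+1})} ∪ {±(eᵢ − e_{i−2} − e_{i+2})}`, `i ∈ ℤ/5`. -/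
def DeltaC : Set V :=
  {x | ∃ i : ZMod 5,
    x = eV + ee i + ee (i + 1) ∨ x = -(eV + ee i + ee (i + 1)) ∨
    x = ee i - ee (i - 2) - ee (i + 2) ∨ x = -(ee i - ee (i - 2) - ee (i + 2))}

/-!
Write `Y = 2X − 3·id`. Since `X` is self-adjoint, the pairings `s(λb, y)` with the basis vectors `b`
are the coordinates of `λy = p·y + q·Yy`. For `y ∈ Δ_c` the vectors `y` and `Yy` have all their
nonzero coordinates equal to `±1`, and their supports partition the basis. So the pairings are `±p`
on the support of `y` and `±q` on its complement: having them in `{-1, 0, 1}` bounds `p` and `q`,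
and a single vanishing one forces `p = 0` or `q = 0`.
-/

/-- Two nonzero vectors with entries in `{-1, 0, 1}` whose supports partition the index set: the
relation between `y ∈ Δ_c` and its image under `2X − 3·id`. -/
structure SignComplementary {ι R : Type*} [Ring R] (y z : ι → R) : Prop where
  apply_cases : ∀ j, (y j = 1 ∨ y j = -1) ∧ z j = 0 ∨ y j = 0 ∧ (z j = 1 ∨ z j = -1)
  left_ne_zero : y ≠ 0
  right_ne_zero : z ≠ 0

namespace SignComplementary

variable {ι R : Type*} [Ring R] {y z : ι → R} {p q : R}

lemma symm (h : SignComplementary y z) : SignComplementary z y where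
  apply_cases j := (h.apply_cases j).symm.imp And.symm And.symm
  left_ne_zero := h.right_ne_zero
  right_ne_zero := h.left_ne_zero

lemma neg (h : SignComplementary y z) : SignComplementary (-y) (-z) where
  apply_cases j := by simpa [neg_eq_iff_eq_neg, or_comm] using h.apply_cases j
  left_ne_zero := neg_ne_zero.mpr h.left_ne_zero
  right_ne_zero := neg_ne_zero.mpr h.right_ne_zero

lemma left_coeff_cases (h : SignComplementary y z)
    (hval : ∀ j, p * y j + q * z j = -1 ∨ p * y j + q * z j = 0 ∨ p * y j + q * z j = 1) :
    p = -1 ∨ p = 0 ∨ p = 1 := by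
  obtain ⟨j, hj⟩ := Function.ne_iff.mp h.left_ne_zero
  have hpj := hval j
  rcases h.apply_cases j with ⟨hy | hy, hz⟩ | ⟨hy, -⟩
  · simpa [hy, hz] using hpj
  · simpa [hy, hz, neg_eq_iff_eq_neg, or_comm, or_assoc, or_left_comm] using hpj
  · exact absurd hy hj

lemma right_coeff_cases (h : SignComplementary y z)
    (hval : ∀ j, p * y j + q * z j = -1 ∨ p * y j + q * z j = 0 ∨ p * y j + q * z j = 1) :
    q = -1 ∨ q = 0 ∨ q = 1 :=
  h.symm.left_coeff_cases (q := p) fun j => by simpa only [add_comm] using hval j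

lemma left_or_right_coeff_eq_zero (h : SignComplementary y z) {j : ι}
    (hj : p * y j + q * z j = 0) : p = 0 ∨ q = 0 := by
  rcases h.apply_cases j with ⟨hy | hy, hz⟩ | ⟨hy, hz | hz⟩ <;> simp_all

end SignComplementary

lemma bvec_mem_deltaIr (j : J5) : bvec j ∈ DeltaIr :=
  match j with
  | none => .inl rfl
  | some i => .inr (.inr ⟨i, .inl rfl⟩)

@[simp]
lemma eV_apply_none : eV none = 1 := Pi.single_eq_same none 1

@[simp]
lemma eV_apply_some (k : ZMod 5) : eV (some k) = 0 := Pi.single_eq_of_ne (by simp) 1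

@[simp]
lemma ee_apply_none (i : ZMod 5) : ee i none = 0 := Pi.single_eq_of_ne (by simp) 1

lemma ee_apply_some (i k : ZMod 5) : ee i (some k) = if k = i then 1 else 0 := by
  simp [ee, Pi.single_apply]

lemma sform_bvec_left (j : J5) (y : V) : sform (bvec j) y = y j :=
  single_one_dotProduct j y

lemma eps_apply (j : J5) : eps j = 1 / 2 := by
  cases j <;> simp [eps, ee_apply_some]

lemma sum_ee_eq (i : ZMod 5) :
    ∑ k, ee k = ee i + ee (i + 1) + ee (i + 2) + ee (i + 3) + ee (i + 4) := by
  rw [← Equiv.sum_comp (Equiv.addLeft i)]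
  have hsum : ∑ d : ZMod 5, ee (i + d) =
      ee (i + 0) + ee (i + 1) + ee (i + 2) + ee (i + 3) + ee (i + 4) := Fin.sum_univ_five _
  simpa only [Equiv.coe_addLeft, add_zero] using hsum

lemma Xmap_apply_none (x : V) : Xmap x none = (∑ j, x j) / 2 := add_zero _

lemma Xmap_apply_some (x : V) (k : ZMod 5) :
    Xmap x (some k) = (∑ j, x j) / 2 + (-x (some (k - 2)) - x (some (k + 2))) := rfl

lemma Xmap_eV : Xmap eV = eps := by
  ext (_ | k) <;> simp [Xmap_apply_none, Xmap_apply_some, eps_apply, Fintype.sum_option]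

lemma Xmap_ee (i : ZMod 5) : Xmap (ee i) = eps - ee (i + 2) - ee (i - 2) := by
  have hsum : ∑ j, ee i j = 1 := by simp [Fintype.sum_option, ee_apply_some]
  ext (_ | k)
  · simp [Xmap_apply_none, hsum, eps_apply]
  · simp only [Xmap_apply_some, hsum, Pi.sub_apply, eps_apply, ee_apply_some, sub_eq_iff_eq_add,
      eq_sub_iff_add_eq]
    ring

lemma sform_eq_dotProduct (x y : V) : sform x y = x ⬝ᵥ y := rfl

lemma sform_Xmap_left (x y : V) : sform (Xmap x) y = sform x (Xmap y) := by
  have shift (f g : ZMod 5 → ℚ) : ∑ k, f (k - 2) * g k = ∑ k, f k * g (k + 2) := by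
    rw [← Equiv.sum_comp (Equiv.addRight 2)]
    simp
  have shift_back (f g : ZMod 5 → ℚ) : ∑ k, f (k + 2) * g k = ∑ k, f k * g (k - 2) := by
    simpa only [mul_comm] using (shift g f).symm
  have hX (u v : V) : sform (Xmap u) v = (∑ j, u j) * (∑ j, v j) / 2 -
      ∑ k, u (some (k - 2)) * v (some k) - ∑ k, u (some (k + 2)) * v (some k) := by
    simp only [sform, Xmap_apply_none, Xmap_apply_some, add_mul, sub_mul, neg_mul,
      Finset.sum_add_distrib, ← Finset.mul_sum, Fintype.sum_option, Finset.sum_sub_distrib,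
      Finset.sum_neg_distrib]
    ring
  have hcomm : sform x (Xmap y) = sform (Xmap y) x := dotProduct_comm _ _
  rw [hcomm, hX, hX, shift (fun k => x (some k)) fun k => y (some k),
    shift_back (fun k => x (some k)) fun k => y (some k)]
  simp only [mul_comm]
  ring

/-- The endomorphism `Y = 2X − 3·id` of `V`, which together with `id` spans the maps `λ`. -/
def Ymap : V →ₗ[ℚ] V := (2 : ℚ) • Xmap - (3 : ℚ) • LinearMap.id

lemma Ymap_apply (x : V) : Ymap x = (2 : ℚ) • Xmap x - (3 : ℚ) • x := rfl

lemma sform_Ymap_left (x y : V) : sform (Ymap x) y = sform x (Ymap y) := by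
  have hX : Xmap x ⬝ᵥ y = x ⬝ᵥ Xmap y := sform_Xmap_left x y
  simp only [sform_eq_dotProduct, Ymap_apply, sub_dotProduct, smul_dotProduct, dotProduct_sub,
    dotProduct_smul, hX]

lemma sform_smul_id_add_smul_Ymap_bvec (p q : ℚ) (j : J5) (y : V) :
    sform ((p • LinearMap.id + q • Ymap : V →ₗ[ℚ] V) (bvec j)) y = p * y j + q * Ymap y j := by
  rw [← sform_bvec_left j y, ← sform_bvec_left j (Ymap y), ← sform_Ymap_left]
  simp only [sform_eq_dotProduct, LinearMap.add_apply, LinearMap.smul_apply, LinearMap.id_apply,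
    add_dotProduct, smul_dotProduct, smul_eq_mul]

lemma Ymap_eV_add_ee_add_ee (i : ZMod 5) :
    Ymap (eV + ee i + ee (i + 1)) = ee (i + 2) - ee (i + 3) + ee (i + 4) := by
  have h_add_three : i + 1 + 2 = i + 3 := by ring
  have h_sub_two : i - 2 = i + 3 := by decide +revert
  have h_sub_one : i + 1 - 2 = i + 4 := by decide +revert
  simp only [Ymap_apply, map_add, Xmap_eV, Xmap_ee, eps, sum_ee_eq i, h_add_three, h_sub_two,
    h_sub_one]
  module

lemma Ymap_ee_sub_ee_sub_ee (i : ZMod 5) :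
    Ymap (ee i - ee (i - 2) - ee (i + 2)) = ee (i + 1) + ee (i - 1) - eV := by
  have h_sub_one : i - 1 = i + 4 := by decide +revert
  have h_sub_two : i - 2 = i + 3 := by decide +revert
  have h_add_four : i + 2 + 2 = i + 4 := by ring
  have h_add_five : i + 3 + 2 = i := by decide +revert
  have h_add_one : i + 3 - 2 = i + 1 := by ring
  simp only [Ymap_apply, map_sub, Xmap_ee, eps, sum_ee_eq i, add_sub_cancel_right, h_sub_one,
    h_sub_two, h_add_four, h_add_five, h_add_one]
  module

lemma eq_add_cases (i k : ZMod 5) :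
    k = i ∨ k = i + 1 ∨ k = i + 2 ∨ k = i + 3 ∨ k = i + 4 := by
  decide +revert

lemma signComplementary_Ymap_eV_add_ee_add_ee (i : ZMod 5) :
    SignComplementary (eV + ee i + ee (i + 1)) (Ymap (eV + ee i + ee (i + 1))) := by
  rw [Ymap_eV_add_ee_add_ee]
  refine ⟨?_, fun h => ?_, fun h => ?_⟩
  · rintro (_ | k)
    · simp
    · obtain rfl | rfl | rfl | rfl | rfl := eq_add_cases i k <;> simp +decide [ee_apply_some]
  · simpa using congrFun h none
  · simpa +decide [ee_apply_some] using congrFun h (some (i + 2))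

lemma signComplementary_Ymap_ee_sub_ee_sub_ee (i : ZMod 5) :
    SignComplementary (ee i - ee (i - 2) - ee (i + 2)) (Ymap (ee i - ee (i - 2) - ee (i + 2))) := by
  rw [Ymap_ee_sub_ee_sub_ee]
  refine ⟨?_, fun h => ?_, fun h => ?_⟩
  · rintro (_ | k)
    · simp
    · obtain rfl | rfl | rfl | rfl | rfl := eq_add_cases i k <;>
        simp +decide [ee_apply_some, sub_eq_add_neg]
  · simpa +decide [ee_apply_some, sub_eq_add_neg] using congrFun h (some i)
  · simpa using congrFun h none

lemma signComplementary_Ymap {y : V} (hy : y ∈ DeltaC) : SignComplementary y (Ymap y) := by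
  obtain ⟨i, rfl | rfl | rfl | rfl⟩ := hy
  · exact signComplementary_Ymap_eV_add_ee_add_ee i
  · simpa only [map_neg] using (signComplementary_Ymap_eV_add_ee_add_ee i).neg
  · exact signComplementary_Ymap_ee_sub_ee_sub_ee i
  · simpa only [map_neg] using (signComplementary_Ymap_ee_sub_ee_sub_ee i).neg

theorem lambda_of_deltaIr_pairing_general {p q : ℚ} (hpq : ¬(p = 0 ∧ q = 0)) {lam : V →ₗ[ℚ] V}
    (hlam : lam = p • LinearMap.id + q • Ymap) {y : V} (hy : y ∈ DeltaC)
    (hval : ∀ x ∈ DeltaIr, sform (lam x) y = -1 ∨ sform (lam x) y = 0 ∨ sform (lam x) y = 1)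
    (hcard : Set.ncard {j : J5 | sform (lam (bvec j)) y ≠ 0} ≤ 5) :
    ((p = 1 ∨ p = -1) ∧ q = 0) ∨ (p = 0 ∧ (q = 1 ∨ q = -1)) := by
  have hcompl : SignComplementary y (Ymap y) := signComplementary_Ymap hy
  have hpair (j : J5) : sform (lam (bvec j)) y = p * y j + q * Ymap y j := by
    rw [hlam, sform_smul_id_add_smul_Ymap_bvec]
  have hcoord (j : J5) := hpair j ▸ hval (bvec j) (bvec_mem_deltaIr j)
  have hp : p = -1 ∨ p = 0 ∨ p = 1 := hcompl.left_coeff_cases hcoord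
  have hq : q = -1 ∨ q = 0 ∨ q = 1 := hcompl.right_coeff_cases hcoord
  obtain ⟨j, hj⟩ : ∃ j, sform (lam (bvec j)) y = 0 := by
    by_contra! hne
    simp [hne, Set.ncard_univ] at hcard
  have hzero : p = 0 ∨ q = 0 := hcompl.left_or_right_coeff_eq_zero (hpair j ▸ hj)
  tauto

/-- Suppose `p, q ∈ ℤ` are not both zero and `λ = p·id + q·(2X − 3·id)` satisfies
`s(λx, y) ∈ {−1,0,1}` for all `x ∈ Δ_ir`, `y ∈ Δ_c`, and at most three of the six basis
vectors `b` satisfy `s(λb, e + e₀ + e₁) ≠ 0`. Then `(p,q) = (±1, 0)` or `(p,q) = (0, ±1)`,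
i.e. `λ = ±id` or `λ = ±(2X − 3·id)`. -/
theorem lambda_of_deltaIr_pairing (p q : ℤ) (hpq : ¬(p = 0 ∧ q = 0)) (lam : V →ₗ[ℚ] V)
    (hlam : lam = (p : ℚ) • (LinearMap.id : V →ₗ[ℚ] V) +
      (q : ℚ) • ((2 : ℚ) • Xmap - (3 : ℚ) • (LinearMap.id : V →ₗ[ℚ] V)))
    (hval : ∀ x ∈ DeltaIr, ∀ y ∈ DeltaC,
      sform (lam x) y = -1 ∨ sform (lam x) y = 0 ∨ sform (lam x) y = 1)
    (hcard : Set.ncard {j : J5 | sform (lam (bvec j)) (eV + ee 0 + ee 1) ≠ 0} ≤ 3) :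
    ((p = 1 ∨ p = -1) ∧ q = 0) ∨ (p = 0 ∧ (q = 1 ∨ q = -1)) := by
  have hy : eV + ee 0 + ee 1 ∈ DeltaC := ⟨0, .inl (by rw [zero_add])⟩
  exact_mod_cast lambda_of_deltaIr_pairing_general (mod_cast hpq) hlam hy
    (fun x hx => hval x hx _ hy) (hcard.trans (by norm_num))
end

section
/- Let G be the subgroup of GL(V) generated by σ₅ and σ₂. Then: (i) the orbit {g(e) : g ∈ G} equals Δ_ir := {±e, ±e₀, …, ±e₄}, and its ℤ-span equals E₀; (ii) the orbit {g(e + e₀ + e₁) : g ∈ G} equals Δ_c := {±(e + eᵢ + e_{i+1}) : i ∈ ℤ/5} ∪ {±(eᵢ − e_{i−2} − e_{i+2}) : i ∈ ℤ/5}, and its ℤ-span also equals E₀. -/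
/-- Index rotation `some i ↦ some (i+1)`, `none ↦ none`. -/
def rotIdx : J5 ≃ J5 := Equiv.optionCongr (Equiv.addRight (1 : ZMod 5))

/-- `σ₅ : V ≃ V`, with `σ₅(e) = e` and `σ₅(eᵢ) = e_{i+1}`. -/
def s5 : V ≃ₗ[ℚ] V := LinearEquiv.funCongrLeft ℚ ℚ rotIdx.symm

/-- Index involution underlying `σ₂`. -/
def t2 : J5 → J5
  | none => some 0
  | some i => if i = 0 then none else if i = 1 then some 4 else if i = 4 then some 1 else some i

/-- Sign function underlying `σ₂`. -/
def sg2 : J5 → ℚ := fun j => if j = some 2 ∨ j = some 3 then -1 else 1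

/-- The function underlying `σ₂`. -/
def s2fun : V → V := fun x j => sg2 j * x (t2 j)

lemma t2_invol : ∀ j, t2 (t2 j) = j := by decide

lemma sg2_mul : ∀ j, sg2 j * sg2 (t2 j) = 1 := by
  intro j
  rcases j with _ | i
  · simp (config := { decide := true }) [sg2, t2]
  · fin_cases i <;> simp (config := { decide := true }) [sg2, t2]

lemma s2fun_invol : Function.Involutive s2fun := by
  intro x
  funext j
  show sg2 j * (sg2 (t2 j) * x (t2 (t2 j))) = x j
  rw [t2_invol, ← mul_assoc, sg2_mul, one_mul]

/-- `σ₂ : V ≃ V`, with `σ₂(e) = e₀`, `σ₂(e₀) = e`, `σ₂(e₁) = e₄`, `σ₂(e₄) = e₁`,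
`σ₂(e₂) = −e₂`, `σ₂(e₃) = −e₃`. -/
def s2 : V ≃ₗ[ℚ] V where
  toFun := s2fun
  invFun := s2fun
  left_inv := s2fun_invol
  right_inv := s2fun_invol
  map_add' x y := by funext j; simp [s2fun, mul_add]
  map_smul' c x := by funext j; simp [s2fun]; ring

/-- `E₀ ⊂ V`: the `ℤ`-span of the basis `{e, e₀, …, e₄}`. -/
def E0 : Submodule ℤ V := Submodule.span ℤ (Set.range bvec)

/-- The icosahedral group `G = ⟨σ₅, σ₂⟩ ≅ A₅` inside `GL(V)`. -/
def Gico : Subgroup (V ≃ₗ[ℚ] V) := Subgroup.closure {s5, s2}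

/-!
The vectors `±e, ±eᵢ` play the role of the twelve vertices of an icosahedron, with `±` the antipodal
map, `σ₅` the rotation about the vertex `e` and `σ₂` a half-turn exchanging `e` and `e₀`; the
vectors `±(e + eᵢ + eᵢ₊₁)` and `±(eᵢ - eᵢ₋₂ - eᵢ₊₂)` are then the vertex sums of its twenty faces.
Each family is finite, symmetric and stable under both generators, so it contains the orbits of its
elements. Conversely `σ₅` is transitive on each family indexed by `ℤ/5`, `σ₂` connects these
families, and some element of each orbit is sent to its negative, which makes the orbit symmetric.

The faces span `E₀` because `(e + eᵢ₊₂ + eᵢ₊₃) + (eᵢ - eᵢ₋₂ - eᵢ₊₂) = e + eᵢ`.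
-/

section GroupActions

open MulAction
open scoped Pointwise

variable {G α M : Type*} [Group G]

lemma orbit_subgroup_eq_setOf [MulAction G α] (H : Subgroup G) (a : α) :
    orbit H a = {x | ∃ g ∈ H, g • a = x} := by
  ext x
  simp only [mem_orbit_iff, Subtype.exists, Subgroup.mk_smul, exists_prop, Set.mem_ofPred_eq]

lemma smul_mem_orbit_subgroup [MulAction G α] {H : Subgroup G} {g : G} (hg : g ∈ H) {a x : α}
    (hx : x ∈ orbit H a) : g • x ∈ orbit H a :=
  mem_orbit_of_mem_orbit (⟨g, hg⟩ : H) hx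

lemma orbit_closure_subset [MulAction G α] {S : Set G} {T : Set α} (hT : T.Finite)
    (hST : ∀ g ∈ S, ∀ x ∈ T, g • x ∈ T) {a : α} (ha : a ∈ T) :
    orbit (Subgroup.closure S) a ⊆ T := by
  have hle : Subgroup.closure S ≤ stabilizer G T :=
    (Subgroup.closure_le _).2 fun g hg => (mem_stabilizer_set' hT).2 (hST g hg)
  rintro _ ⟨g, rfl⟩
  exact (mem_stabilizer_set' hT).1 (hle g.2) ha

lemma zpow_smul_eq_of_smul_eq_add_one [MulAction G α] {n : ℕ} {f : ZMod n → α} {g : G}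
    (hf : ∀ i, g • f i = f (i + 1)) (m : ℤ) (i : ZMod n) : g ^ m • f i = f (i + m) := by
  have hinv (i : ZMod n) : g⁻¹ • f i = f (i - 1) := by
    rw [inv_smul_eq_iff, hf, sub_add_cancel]
  induction m generalizing i with
  | zero => simp only [zpow_zero, one_smul, Int.cast_zero, add_zero]
  | succ m ih => rw [zpow_add_one, mul_smul, hf, ih]; push_cast; congr 1; ring
  | pred m ih => rw [zpow_sub_one, mul_smul, hinv, ih]; push_cast; congr 1; ring

lemma mem_orbit_of_smul_eq_add_one [MulAction G α] {n : ℕ} {f : ZMod n → α} {H : Subgroup G}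
    {g : G} (hg : g ∈ H) (hf : ∀ i, g • f i = f (i + 1)) {a : α} {k : ZMod n}
    (hk : f k ∈ orbit H a) (i : ZMod n) : f i ∈ orbit H a := by
  obtain ⟨m, hm⟩ := ZMod.intCast_surjective (i - k)
  have hi : g ^ m • f k = f i := by
    rw [zpow_smul_eq_of_smul_eq_add_one hf, hm, add_sub_cancel]
  exact hi ▸ smul_mem_orbit_subgroup (zpow_mem hg m) hk

variable [AddGroup M] [DistribMulAction G M]

lemma neg_mem_orbit_of_neg_mem_orbit {a x y : M} (hx : x ∈ orbit G a) (hnx : -x ∈ orbit G a)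
    (hy : y ∈ orbit G a) : -y ∈ orbit G a := by
  rw [← orbit_eq_iff.2 hx] at hy
  obtain ⟨g, rfl⟩ := hy
  simpa only [smul_neg] using mem_orbit_of_mem_orbit g hnx

lemma orbit_closure_eq_union_neg {S : Set G} {A : Set M} (hA : A.Finite)
    (hSA : ∀ g ∈ S, ∀ x ∈ A, g • x ∈ A ∪ -A) {a x : M} (ha : a ∈ A)
    (hsub : A ⊆ orbit (Subgroup.closure S) a)
    (hx : x ∈ A) (hnx : -x ∈ orbit (Subgroup.closure S) a) :
    orbit (Subgroup.closure S) a = A ∪ -A := by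
  apply Set.Subset.antisymm
  · refine orbit_closure_subset (hA.union hA.neg) ?_ (Or.inl ha)
    rintro g hg y (hy | hy)
    · exact hSA g hg y hy
    · simpa only [smul_neg, Set.mem_union, Set.mem_neg, neg_neg, or_comm] using hSA g hg (-y) hy
  · refine Set.union_subset hsub fun y hy => ?_
    simpa only [neg_neg] using neg_mem_orbit_of_neg_mem_orbit (hsub hx) hnx (hsub hy)

end GroupActions

section SymmetricSets

open scoped Pointwise

lemma mem_neg_range {ι M : Type*} [InvolutiveNeg M] {f : ι → M} {x : M} :
    x ∈ -Set.range f ↔ ∃ i, x = -f i :=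
  exists_congr fun _ => eq_comm.trans neg_eq_iff_eq_neg

lemma span_union_neg {R M : Type*} [Ring R] [AddCommGroup M] [Module R M] (A : Set M) :
    Submodule.span R (A ∪ -A) = Submodule.span R A := by
  rw [Submodule.span_union, Submodule.span_neg, sup_idem]

end SymmetricSets

section Generators

lemma s5_mem_Gico : s5 ∈ Gico := Subgroup.subset_closure (Or.inl rfl)

lemma s2_mem_Gico : s2 ∈ Gico := Subgroup.subset_closure (Or.inr rfl)

lemma s5_bvec (j : J5) : s5 (bvec j) = bvec (rotIdx j) := by
  ext k
  simp [s5, bvec, Pi.single_apply, LinearMap.funLeft_apply, Equiv.symm_apply_eq]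

lemma sg2_t2 (j : J5) : sg2 (t2 j) = sg2 j := by
  revert j
  decide

lemma s2_bvec (j : J5) : s2 (bvec j) = sg2 j • bvec (t2 j) := by
  ext k
  change sg2 k * bvec j (t2 k) = sg2 j * bvec (t2 j) k
  obtain rfl | hk := eq_or_ne k (t2 j)
  · simp only [bvec, t2_invol, sg2_t2, Pi.single_eq_same]
  · have hj : t2 k ≠ j := fun h => hk (by rw [← h, t2_invol])
    simp only [bvec, Pi.single_eq_of_ne hk, Pi.single_eq_of_ne hj, mul_zero]

lemma s5_eV : s5 eV = eV := s5_bvec none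

lemma s5_ee (i : ZMod 5) : s5 (ee i) = ee (i + 1) := s5_bvec (some i)

lemma s2_eV : s2 eV = ee 0 := (s2_bvec none).trans (one_smul ℚ _)

lemma s2_ee_two : s2 (ee 2) = -ee 2 := (s2_bvec (some 2)).trans (neg_one_smul ℚ _)

end Generators

section Vertices

open MulAction
open scoped Pointwise

lemma DeltaIr_eq_union_neg : DeltaIr = Set.range bvec ∪ -Set.range bvec := by
  ext x
  simp only [DeltaIr, eV, ee, bvec, Set.mem_ofPred_eq, Set.mem_union, mem_neg_range,
    Set.mem_range, Option.exists, exists_or, eq_comm (b := x)]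
  tauto

lemma apply_bvec_mem_union_neg {g : V ≃ₗ[ℚ] V} (hg : g ∈ ({s5, s2} : Set (V ≃ₗ[ℚ] V))) (j : J5) :
    g (bvec j) ∈ Set.range bvec ∪ -Set.range bvec := by
  obtain rfl | rfl := hg
  · exact Or.inl ⟨rotIdx j, (s5_bvec j).symm⟩
  · rw [s2_bvec, sg2]
    split_ifs
    · exact Or.inr ⟨t2 j, by rw [neg_one_smul, neg_neg]⟩
    · exact Or.inl ⟨t2 j, (one_smul ℚ _).symm⟩

lemma bvec_mem_orbit_eV (j : J5) : bvec j ∈ orbit Gico eV := by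
  have he : eV ∈ orbit Gico eV := mem_orbit_self eV
  have he₀ : ee 0 ∈ orbit Gico eV := s2_eV ▸ smul_mem_orbit_subgroup s2_mem_Gico he
  cases j with
  | none => exact he
  | some i => exact mem_orbit_of_smul_eq_add_one s5_mem_Gico s5_ee he₀ i

lemma orbit_eV : orbit Gico eV = DeltaIr := by
  have hneg : -ee 2 ∈ orbit Gico eV :=
    s2_ee_two ▸ smul_mem_orbit_subgroup s2_mem_Gico (bvec_mem_orbit_eV (some 2))
  rw [DeltaIr_eq_union_neg]
  exact orbit_closure_eq_union_neg (Set.finite_range bvec)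
    (fun g hg => Set.forall_mem_range.2 (apply_bvec_mem_union_neg hg)) ⟨none, rfl⟩
    (Set.range_subset_iff.2 bvec_mem_orbit_eV) ⟨some 2, rfl⟩ hneg

lemma span_DeltaIr : Submodule.span ℤ DeltaIr = E0 := by
  rw [DeltaIr_eq_union_neg, span_union_neg, E0]

end Vertices

section Faces

open MulAction
open scoped Pointwise

/-- The vertex sum `e + eᵢ + eᵢ₊₁` of a face of the icosahedron containing the vertex `e`. -/
def capFace (i : ZMod 5) : V := eV + ee i + ee (i + 1)

/-- The vertex sum `eᵢ - eᵢ₋₂ - eᵢ₊₂` of a face of the icosahedron containing neither of the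
antipodal vertices `e` and `-e`. -/
def beltFace (i : ZMod 5) : V := ee i - ee (i - 2) - ee (i + 2)

/-- The vertex sums of ten faces of the icosahedron, one from each antipodal pair. -/
def faces : Set V := Set.range capFace ∪ Set.range beltFace

lemma capFace_mem_faces (i : ZMod 5) : capFace i ∈ faces := Or.inl ⟨i, rfl⟩

lemma beltFace_mem_faces (i : ZMod 5) : beltFace i ∈ faces := Or.inr ⟨i, rfl⟩

lemma finite_faces : faces.Finite := (Set.finite_range capFace).union (Set.finite_range beltFace)

lemma DeltaC_eq_union_neg : DeltaC = faces ∪ -faces := by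
  ext x
  simp only [DeltaC, faces, capFace, beltFace, Set.mem_ofPred_eq, Set.union_neg, Set.mem_union,
    mem_neg_range, Set.mem_range, exists_or, eq_comm (b := x)]
  tauto

lemma s5_capFace (i : ZMod 5) : s5 (capFace i) = capFace (i + 1) := by
  simp only [capFace, map_add, s5_eV, s5_ee]

lemma s5_beltFace (i : ZMod 5) : s5 (beltFace i) = beltFace (i + 1) := by
  simp only [beltFace, map_sub, s5_ee, add_right_comm, sub_add_eq_add_sub]

lemma s2_capFace_zero : s2 (capFace 0) = capFace 4 := by decide +kernel

lemma s2_capFace_one : s2 (capFace 1) = -beltFace 2 := by decide +kernel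

lemma s2_capFace_two : s2 (capFace 2) = beltFace 0 := by decide +kernel

lemma s2_capFace_three : s2 (capFace 3) = -beltFace 3 := by decide +kernel

lemma s2_capFace_four : s2 (capFace 4) = capFace 0 := by decide +kernel

lemma s2_beltFace_zero : s2 (beltFace 0) = capFace 2 := by decide +kernel

lemma s2_beltFace_one : s2 (beltFace 1) = -beltFace 1 := by decide +kernel

lemma s2_beltFace_two : s2 (beltFace 2) = -capFace 1 := by decide +kernel

lemma s2_beltFace_three : s2 (beltFace 3) = -capFace 3 := by decide +kernel

lemma s2_beltFace_four : s2 (beltFace 4) = -beltFace 4 := by decide +kernel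

lemma neg_capFace_mem_union_neg (i : ZMod 5) : -capFace i ∈ faces ∪ -faces :=
  Or.inr (Set.neg_mem_neg.2 (capFace_mem_faces i))

lemma neg_beltFace_mem_union_neg (i : ZMod 5) : -beltFace i ∈ faces ∪ -faces :=
  Or.inr (Set.neg_mem_neg.2 (beltFace_mem_faces i))

lemma s2_capFace_mem_union_neg (i : ZMod 5) : s2 (capFace i) ∈ faces ∪ -faces := by
  obtain rfl | rfl | rfl | rfl | rfl : i = 0 ∨ i = 1 ∨ i = 2 ∨ i = 3 ∨ i = 4 := by
    revert i; decide
  · exact s2_capFace_zero ▸ Or.inl (capFace_mem_faces 4)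
  · exact s2_capFace_one ▸ neg_beltFace_mem_union_neg 2
  · exact s2_capFace_two ▸ Or.inl (beltFace_mem_faces 0)
  · exact s2_capFace_three ▸ neg_beltFace_mem_union_neg 3
  · exact s2_capFace_four ▸ Or.inl (capFace_mem_faces 0)

lemma s2_beltFace_mem_union_neg (i : ZMod 5) : s2 (beltFace i) ∈ faces ∪ -faces := by
  obtain rfl | rfl | rfl | rfl | rfl : i = 0 ∨ i = 1 ∨ i = 2 ∨ i = 3 ∨ i = 4 := by
    revert i; decide
  · exact s2_beltFace_zero ▸ Or.inl (capFace_mem_faces 2)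
  · exact s2_beltFace_one ▸ neg_beltFace_mem_union_neg 1
  · exact s2_beltFace_two ▸ neg_capFace_mem_union_neg 1
  · exact s2_beltFace_three ▸ neg_capFace_mem_union_neg 3
  · exact s2_beltFace_four ▸ neg_beltFace_mem_union_neg 4

lemma apply_face_mem_union_neg {g : V ≃ₗ[ℚ] V} (hg : g ∈ ({s5, s2} : Set (V ≃ₗ[ℚ] V))) {x : V}
    (hx : x ∈ faces) : g x ∈ faces ∪ -faces := by
  obtain rfl | rfl := hg <;> obtain ⟨i, rfl⟩ | ⟨i, rfl⟩ := hx
  · exact s5_capFace i ▸ Or.inl (capFace_mem_faces (i + 1))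
  · exact s5_beltFace i ▸ Or.inl (beltFace_mem_faces (i + 1))
  · exact s2_capFace_mem_union_neg i
  · exact s2_beltFace_mem_union_neg i

lemma capFace_mem_orbit (i : ZMod 5) : capFace i ∈ orbit Gico (capFace 0) :=
  mem_orbit_of_smul_eq_add_one s5_mem_Gico s5_capFace (mem_orbit_self (capFace 0)) i

lemma beltFace_mem_orbit (i : ZMod 5) : beltFace i ∈ orbit Gico (capFace 0) := by
  have h₀ : beltFace 0 ∈ orbit Gico (capFace 0) :=
    s2_capFace_two ▸ smul_mem_orbit_subgroup s2_mem_Gico (capFace_mem_orbit 2)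
  exact mem_orbit_of_smul_eq_add_one s5_mem_Gico s5_beltFace h₀ i

lemma orbit_capFace_zero : orbit Gico (capFace 0) = DeltaC := by
  have hneg : -beltFace 1 ∈ orbit Gico (capFace 0) :=
    s2_beltFace_one ▸ smul_mem_orbit_subgroup s2_mem_Gico (beltFace_mem_orbit 1)
  rw [DeltaC_eq_union_neg]
  exact orbit_closure_eq_union_neg finite_faces
    (fun g hg x hx => apply_face_mem_union_neg hg hx) (capFace_mem_faces 0)
    (Set.union_subset (Set.range_subset_iff.2 capFace_mem_orbit)
      (Set.range_subset_iff.2 beltFace_mem_orbit))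
    (beltFace_mem_faces 1) hneg

lemma capFace_add_two_add_beltFace (i : ZMod 5) : capFace (i + 2) + beltFace i = eV + ee i := by
  have hi : i + 2 + 1 = i - 2 := by revert i; decide
  rw [capFace, beltFace, hi]
  abel

lemma span_faces_le_E0 : Submodule.span ℤ faces ≤ E0 := by
  have he : eV ∈ E0 := Submodule.subset_span ⟨none, rfl⟩
  have hee (i : ZMod 5) : ee i ∈ E0 := Submodule.subset_span ⟨some i, rfl⟩
  refine Submodule.span_le.2 ?_
  rintro _ (⟨i, rfl⟩ | ⟨i, rfl⟩)
  · exact add_mem (add_mem he (hee i)) (hee (i + 1))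
  · exact sub_mem (sub_mem (hee i) (hee (i - 2))) (hee (i + 2))

lemma E0_le_span_faces : E0 ≤ Submodule.span ℤ faces := by
  have hcap (i : ZMod 5) : capFace i ∈ Submodule.span ℤ faces :=
    Submodule.subset_span (capFace_mem_faces i)
  have hsum (i : ZMod 5) : eV + ee i ∈ Submodule.span ℤ faces :=
    capFace_add_two_add_beltFace i ▸
      add_mem (hcap (i + 2)) (Submodule.subset_span (beltFace_mem_faces i))
  have hee (i : ZMod 5) : ee i ∈ Submodule.span ℤ faces := by
    simpa only [capFace, add_sub_cancel_left, sub_add_cancel]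
      using sub_mem (hcap (i - 1)) (hsum (i - 1))
  have he : eV ∈ Submodule.span ℤ faces := by
    simpa only [add_sub_cancel_right] using sub_mem (hsum 0) (hee 0)
  refine Submodule.span_le.2 ?_
  rintro _ ⟨_ | i, rfl⟩
  exacts [he, hee i]

lemma span_DeltaC : Submodule.span ℤ DeltaC = E0 := by
  rw [DeltaC_eq_union_neg, span_union_neg]
  exact le_antisymm span_faces_le_E0 E0_le_span_faces

end Faces

/-- The `G`-orbit of `e` is `Δ_ir = {±e, ±e₀, …, ±e₄}` and spans `E₀` over `ℤ`; the
`G`-orbit of `e + e₀ + e₁` is `Δ_c` and also spans `E₀` over `ℤ`. -/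
theorem orbits_of_e_and_eee :
    {x : V | ∃ g ∈ Gico, g eV = x} = DeltaIr ∧
    Submodule.span ℤ {x : V | ∃ g ∈ Gico, g eV = x} = E0 ∧
    {x : V | ∃ g ∈ Gico, g (eV + ee 0 + ee 1) = x} = DeltaC ∧
    Submodule.span ℤ {x : V | ∃ g ∈ Gico, g (eV + ee 0 + ee 1) = x} = E0 := by
  have horbit (v : V) : {x : V | ∃ g ∈ Gico, g v = x} = MulAction.orbit Gico v :=
    (orbit_subgroup_eq_setOf Gico v).symm
  have hface : eV + ee 0 + ee 1 = capFace 0 := by rw [capFace, zero_add]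
  rw [hface, horbit, horbit, orbit_eV, orbit_capFace_zero]
  exact ⟨rfl, span_DeltaIr, rfl, span_DeltaC⟩
end

section
/- For all x, y ∈ V: Σ_{i∈ℤ/5} [ s(x, e+eᵢ)·s(y, e+eᵢ) + s(x, eᵢ+e_{i+1})·s(y, eᵢ+e_{i+1}) + s(x, e_{i−1}−e_{i+1})·s(y, e_{i−1}−e_{i+1}) ] = 4·s(x,y) + 2·s(Xx, y). (That is, the variation tensor Σ_{δ∈Δ_∞/±} δ⊗δ of the monodromy around the singular member of the Wiman–Edge pencil consisting of ten lines equals (4+2X) applied to the inverse form of s.) -/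
section CrossCorrelation

variable {G R : Type*} [Fintype G] [AddCommGroup G]

/-- The cross-correlation `∑ i, f i * g (i + d)` of two functions on a finite abelian group at lag
`d`. Over a commutative ring, the shift-invariant bilinear forms in `f` and `g` are the linear
combinations of these. -/
def crossCorr [NonUnitalNonAssocSemiring R] (f g : G → R) (d : G) : R :=
  ∑ i, f i * g (i + d)

theorem crossCorr_zero [NonUnitalNonAssocSemiring R] (f g : G → R) :
    crossCorr f g 0 = ∑ i, f i * g i := by
  simp only [crossCorr, add_zero]

theorem sum_mul_shift [NonUnitalNonAssocSemiring R] (f g : G → R) (a b : G) :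
    ∑ i, f (i + a) * g (i + b) = crossCorr f g (b - a) :=
  Fintype.sum_equiv (Equiv.addRight a) _ _ fun i => by
    simp only [Equiv.coe_addRight, add_add_sub_cancel]

theorem sum_crossCorr [NonUnitalNonAssocSemiring R] (f g : G → R) :
    ∑ d, crossCorr f g d = (∑ i, f i) * ∑ i, g i := by
  simp only [crossCorr]
  rw [Finset.sum_comm, Finset.sum_mul]
  refine Finset.sum_congr rfl fun i _ => ?_
  rw [← Finset.mul_sum]
  exact congrArg (f i * ·) (Equiv.sum_comp (Equiv.addLeft i) g)

theorem sum_add_shift_mul_add_shift [NonUnitalNonAssocSemiring R] (f g : G → R) (a b : G) :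
    ∑ i, (f (i + a) + f (i + b)) * (g (i + a) + g (i + b)) =
      2 • crossCorr f g 0 + crossCorr f g (b - a) + crossCorr f g (a - b) := by
  simp only [add_mul, mul_add, Finset.sum_add_distrib, sum_mul_shift, sub_self]
  abel

theorem sum_sub_shift_mul_sub_shift [NonUnitalNonAssocRing R] (f g : G → R) (a b : G) :
    ∑ i, (f (i + a) - f (i + b)) * (g (i + a) - g (i + b)) =
      2 • crossCorr f g 0 - crossCorr f g (b - a) - crossCorr f g (a - b) := by
  simp only [sub_mul, mul_sub, Finset.sum_sub_distrib, sum_mul_shift, sub_self]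
  abel

end CrossCorrelation

theorem sum_const_add_mul_const_add {ι R : Type*} [Fintype ι] [NonUnitalNonAssocSemiring R]
    (a b : R) (f g : ι → R) :
    ∑ i, (a + f i) * (b + g i) =
      Fintype.card ι • (a * b) + a * ∑ i, g i + (∑ i, f i) * b + ∑ i, f i * g i := by
  simp only [add_mul, mul_add, Finset.sum_add_distrib, Finset.sum_const, Finset.card_univ,
    ← Finset.mul_sum, ← Finset.sum_mul]
  abel

theorem sum_zmod_five {M : Type*} [AddCommMonoid M] (c : ZMod 5 → M) :
    ∑ d, c d = c 0 + c 1 + c (-1) + c 2 + c (-2) := by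
  -- In `ZMod 5`, `-2` and `-1` compute to `3` and `4`.
  have expand : ∑ d, c d = c 0 + c 1 + c 2 + c (-2) + c (-1) := Fin.sum_univ_five c
  rw [expand]
  abel

/-- The matrix of `2X` is integral, so the coordinate identity needs no division. -/
theorem sum_ten_lines_coords {R : Type*} [CommRing R] (a b : R) (f g : ZMod 5 → R) :
    ∑ i, ((a + f i) * (b + g i) + (f i + f (i + 1)) * (g i + g (i + 1)) +
        (f (i - 1) - f (i + 1)) * (g (i - 1) - g (i + 1))) =
      4 * (a * b + ∑ i, f i * g i) + (a + ∑ i, f i) * (b + ∑ i, g i) -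
        2 * ∑ i, (f (i - 2) + f (i + 2)) * g i := by
  have spokes : ∑ i, (a + f i) * (b + g i) =
      5 * (a * b) + a * ∑ i, g i + (∑ i, f i) * b + crossCorr f g 0 := by
    rw [sum_const_add_mul_const_add, ZMod.card, crossCorr_zero, nsmul_eq_mul, Nat.cast_ofNat]
  have sides : ∑ i, (f i + f (i + 1)) * (g i + g (i + 1)) =
      2 * crossCorr f g 0 + crossCorr f g 1 + crossCorr f g (-1) := by
    simpa using sum_add_shift_mul_add_shift f g 0 1
  have diagonals : ∑ i, (f (i - 1) - f (i + 1)) * (g (i - 1) - g (i + 1)) =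
      2 * crossCorr f g 0 - crossCorr f g 2 - crossCorr f g (-2) := by
    have h := sum_sub_shift_mul_sub_shift f g (-1) 1
    rwa [show (1 - -1 : ZMod 5) = 2 by decide, show (-1 - 1 : ZMod 5) = -2 by decide,
      nsmul_eq_mul, Nat.cast_ofNat] at h
  have distance_two : ∑ i, (f (i - 2) + f (i + 2)) * g i =
      crossCorr f g 2 + crossCorr f g (-2) := by
    have hneg := sum_mul_shift f g (-2) 0
    have hpos := sum_mul_shift f g 2 0
    simp only [add_zero, ← sub_eq_add_neg, sub_neg_eq_add, zero_add, zero_sub] at hneg hpos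
    rw [← hneg, ← hpos, ← Finset.sum_add_distrib]
    simp only [add_mul]
  have total := (sum_crossCorr f g).symm.trans (sum_zmod_five _)
  rw [Finset.sum_add_distrib, Finset.sum_add_distrib, spokes, sides, diagonals, distance_two,
    ← crossCorr_zero]
  linear_combination -total

theorem sform_add_right (x y z : V) : sform x (y + z) = sform x y + sform x z :=
  dotProduct_add x y z

theorem sform_sub_right (x y z : V) : sform x (y - z) = sform x y - sform x z :=
  dotProduct_sub x y z

theorem sform_eV (x : V) : sform x eV = x none :=
  dotProduct_single_one x none

theorem sform_ee (x : V) (i : ZMod 5) : sform x (ee i) = x (some i) :=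
  dotProduct_single_one x (some i)

theorem sform_eq_coords (x y : V) :
    sform x y = x none * y none + ∑ i, x (some i) * y (some i) :=
  Fintype.sum_option _

theorem two_mul_sform_Xmap (x y : V) :
    2 * sform (Xmap x) y =
      (x none + ∑ i, x (some i)) * (y none + ∑ i, y (some i)) -
        2 * ∑ i, (x (some (i - 2)) + x (some (i + 2))) * y (some i) := by
  have apply_none : Xmap x none = (x none + ∑ i, x (some i)) / 2 := by
    simp only [Xmap, LinearMap.coe_mk, AddHom.coe_mk, Fintype.sum_option, add_zero]
  have apply_some (k : ZMod 5) : Xmap x (some k) =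
      (x none + ∑ i, x (some i)) / 2 - (x (some (k - 2)) + x (some (k + 2))) := by
    simp only [Xmap, LinearMap.coe_mk, AddHom.coe_mk, Fintype.sum_option]
    ring
  simp only [sform_eq_coords, apply_none, apply_some, sub_mul, Finset.sum_sub_distrib,
    ← Finset.mul_sum]
  ring

/-- The variation tensor of the singular member of the Wiman–Edge pencil consisting of
ten lines: `Σ_{δ ∈ Δ_∞/±} s(x,δ)·s(y,δ) = 4·s(x,y) + 2·s(Xx,y)`, i.e. the tensor
`Σ_{δ∈Δ_∞/±} δ⊗δ` equals `(4+2X)` applied to the inverse form of `s`. -/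
theorem variation_tensor_ten_lines (x y : V) :
    (∑ i : ZMod 5,
        (sform x (eV + ee i) * sform y (eV + ee i) +
          sform x (ee i + ee (i + 1)) * sform y (ee i + ee (i + 1)) +
          sform x (ee (i - 1) - ee (i + 1)) * sform y (ee (i - 1) - ee (i + 1))))
      = 4 * sform x y + 2 * sform (Xmap x) y := by
  have coords := sum_ten_lines_coords (x none) (y none) (fun i => x (some i)) (fun i => y (some i))
  simp only [sform_add_right, sform_sub_right, sform_eV, sform_ee]
  rw [coords, two_mul_sform_Xmap, sform_eq_coords, add_sub_assoc]
end

section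
/- N₅ has dimension 3 over the field with 5 elements; every vector of N₅ fixed by all coordinate permutations in S₅ is zero; every S₅-invariant F₅-linear functional on N₅ is zero; and N₅ is irreducible as a module over the alternating group A₅: every F₅-subspace of N₅ invariant under all even coordinate permutations is either 0 or all of N₅. -/
/-- The coordinate-sum functional on `(𝔽₅)⁵`. -/
def sumLin : (Fin 5 → ZMod 5) →ₗ[ZMod 5] ZMod 5 where
  toFun v := ∑ i, v i
  map_add' x y := by simp [Finset.sum_add_distrib]
  map_smul' c x := by simp [Finset.mul_sum]

/-- The subspace `{v : (Fin 5 → 𝔽₅) | v₀ + v₁ + v₂ + v₃ + v₄ = 0}`. -/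
def S0 : Submodule (ZMod 5) (Fin 5 → ZMod 5) := LinearMap.ker sumLin

/-- The constant vector `(1,1,1,1,1)`, as an element of `S0`. -/
def cvec : S0 := ⟨fun _ => 1, by simp [S0, LinearMap.mem_ker, sumLin]; decide⟩

/-- The line spanned by the constant vector. -/
def Lline : Submodule (ZMod 5) S0 := Submodule.span (ZMod 5) {cvec}

/-- `N₅`: the quotient of `{Σᵢ vᵢ = 0} ⊂ (𝔽₅)⁵` by the line spanned by `(1,1,1,1,1)`. -/
abbrev N5 := S0 ⧸ Lline

/-- The action of a permutation of the five coordinates on `S0`. -/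
def permS (g : Equiv.Perm (Fin 5)) : S0 →ₗ[ZMod 5] S0 :=
  LinearMap.restrict (LinearMap.funLeft (ZMod 5) (ZMod 5) ⇑g⁻¹)
    (fun v hv => by
      simp only [S0, LinearMap.mem_ker, sumLin, LinearMap.coe_mk, AddHom.coe_mk,
        LinearMap.funLeft_apply] at hv ⊢
      rw [Equiv.sum_comp g⁻¹ v]
      exact hv)

/-- The induced action of a permutation of the five coordinates on `N₅`. -/
def permN (g : Equiv.Perm (Fin 5)) : N5 →ₗ[ZMod 5] N5 :=
  Submodule.mapQ Lline Lline (permS g) (by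
    rw [Lline, Submodule.span_le, Set.singleton_subset_iff]
    have h : permS g cvec = cvec := by
      apply Subtype.ext
      rfl
    simp only [SetLike.mem_coe, Submodule.mem_comap, h]
    exact Submodule.subset_span rfl)

/-!
Over any division ring, and for permutations of `n ≥ 5` coordinates, an `Aₙ`-invariant space `U`
of vectors that contains a non-constant vector contains all vectors of coordinate sum zero. Indeed,
let `v ∈ U` with `v i ≠ v j`. Subtracting from `v` its image under a 3-cycle through `i` and `j`
gives `u ∈ U` supported on three coordinates with `u i = v i - v j`; a second 3-cycle, meeting the
support of `u` only in `i`, then yields a nonzero multiple of some `e_i - e_l`. As `Aₙ` is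
2-transitive, all differences `e_a - e_b` lie in `U`, and they span the vectors of sum zero.
Hence `N₅` is irreducible. Its invariant vectors and invariant functionals vanish because a nonzero
one would span, respectively have as kernel, an invariant subspace, forcing the dimension to be `1`.
-/

section RootVec

variable {ι R : Type*} [DecidableEq ι] [Ring R]

/-- The difference `e_i - e_j` of two standard basis vectors: a root of type `A` when `i ≠ j`, and
`0` when `i = j`. These vectors span the vectors of coordinate sum zero. -/
def rootVec (i j : ι) : ι → R := Pi.single i 1 - Pi.single j 1

theorem rootVec_self (i : ι) : (rootVec i i : ι → R) = 0 := sub_self _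

theorem rootVec_comp_perm (σ : Equiv.Perm ι) (i j : ι) :
    (rootVec (σ i) (σ j) : ι → R) ∘ σ = rootVec i j := by
  ext m
  simp [rootVec, Pi.single_apply]

theorem sum_smul_rootVec [Fintype ι] (v : ι → R) (i : ι) :
    ∑ k, v k • rootVec k i = v - Pi.single i (∑ k, v k) := by
  ext m
  simp [rootVec, Pi.single_apply, mul_sub]

theorem mem_of_sum_eq_zero_of_forall_rootVec_mem [Fintype ι] {U : Submodule R (ι → R)} {v : ι → R}
    (hv : ∑ k, v k = 0) (hU : ∀ i j, i ≠ j → rootVec i j ∈ U) : v ∈ U := by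
  obtain _ | ⟨⟨i⟩⟩ := isEmpty_or_nonempty ι
  · simp [Subsingleton.elim v 0]
  · have hsum : v = ∑ k, v k • rootVec k i := by simp [sum_smul_rootVec, hv]
    rw [hsum]
    refine U.sum_mem fun k _ => U.smul_mem _ ?_
    obtain rfl | hki := eq_or_ne k i
    · simp [rootVec_self]
    · exact hU k i hki

theorem sub_comp_threeCycle_eq_smul_rootVec {u : ι → R} {i l m : ι} (hil : i ≠ l) (him : i ≠ m)
    (hlm : l ≠ m) (hl : u l = 0) (hm : u m = 0) :
    u - u ∘ (Equiv.swap i l * Equiv.swap i m) = u i • rootVec i l := by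
  ext n
  by_cases hni : n = i
  · subst hni
    simp [rootVec, hil, hm, him.symm, hlm.symm, Equiv.swap_apply_of_ne_of_ne]
  by_cases hnl : n = l
  · subst hnl
    simp [rootVec, hl, hni, hlm, Equiv.swap_apply_of_ne_of_ne]
  by_cases hnm : n = m
  · subst hnm
    simp [rootVec, hl, hm, hni, hnl]
  · simp [rootVec, hni, hnl, hnm, Equiv.swap_apply_of_ne_of_ne]

end RootVec

section AlternatingInvariant

open MulAction in
theorem exists_mem_alternatingGroup_apply_eq_apply_eq {ι : Type*} [Fintype ι] [DecidableEq ι]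
    (hι : 4 ≤ Fintype.card ι) {a b c d : ι} (hab : a ≠ b) (hcd : c ≠ d) :
    ∃ σ ∈ alternatingGroup ι, σ a = c ∧ σ b = d := by
  rw [← Nat.card_eq_fintype_card] at hι
  have := alternatingGroup.isMultiplyPretransitive ι
  have : IsMultiplyPretransitive (alternatingGroup ι) ι 2 :=
    isMultiplyPretransitive_of_le (n := Nat.card ι - 2) (by lia) (Nat.sub_le _ _)
  obtain ⟨σ, hσ⟩ := is_two_pretransitive_iff.mp this hab hcd
  exact ⟨σ, σ.2, hσ⟩

variable {ι K : Type*} [Fintype ι] [DecidableEq ι] [DivisionRing K] {U : Submodule K (ι → K)}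

theorem exists_rootVec_mem_of_ne (hι : 5 ≤ Fintype.card ι)
    (hU : ∀ σ ∈ alternatingGroup ι, ∀ v ∈ U, v ∘ σ ∈ U) {v : ι → K} (hv : v ∈ U) {i j : ι}
    (hij : v i ≠ v j) : ∃ l, i ≠ l ∧ rootVec i l ∈ U := by
  have sub_mem {a b c : ι} (hab : a ≠ b) (hac : a ≠ c) (hbc : b ≠ c) {w : ι → K} (hw : w ∈ U) :
      w - w ∘ (Equiv.swap a b * Equiv.swap a c) ∈ U :=
    U.sub_mem hw <|
      hU _ (Equiv.Perm.isThreeCycle_swap_mul_swap_same hab hac hbc).mem_alternatingGroup w hw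
  have hne : i ≠ j := ne_of_apply_ne v hij
  have hcard : 2 < ({i, j}ᶜ : Finset ι).card := by
    rw [Finset.card_compl, Finset.card_pair hne]
    lia
  obtain ⟨k, hk, l, hl, m, hm, hkl, hkm, hlm⟩ := Finset.two_lt_card.mp hcard
  simp only [Finset.mem_compl, Finset.mem_insert, Finset.mem_singleton, not_or] at hk hl hm
  set u : ι → K := v - v ∘ (Equiv.swap i k * Equiv.swap i j) with hu
  have hui : u i = v i - v j := by
    simp [hu, hne.symm, Ne.symm hk.2, Equiv.swap_apply_of_ne_of_ne]
  have hul : u l = 0 := by simp [hu, hl, hkl.symm, Equiv.swap_apply_of_ne_of_ne]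
  have hum : u m = 0 := by simp [hu, hm, hkm.symm, Equiv.swap_apply_of_ne_of_ne]
  have hu_mem : u ∈ U := sub_mem (Ne.symm hk.1) hne hk.2 hv
  have hsmul : (v i - v j) • rootVec i l ∈ U := by
    rw [← hui, ← sub_comp_threeCycle_eq_smul_rootVec (Ne.symm hl.1) (Ne.symm hm.1) hlm hul hum]
    exact sub_mem (Ne.symm hl.1) (Ne.symm hm.1) hlm hu_mem
  exact ⟨l, Ne.symm hl.1, (U.smul_mem_iff (sub_ne_zero.mpr hij)).mp hsmul⟩

theorem constant_or_mem_of_sum_eq_zero (hι : 5 ≤ Fintype.card ι)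
    (hU : ∀ σ ∈ alternatingGroup ι, ∀ v ∈ U, v ∘ σ ∈ U) :
    (∀ v ∈ U, ∀ i j, v i = v j) ∨ ∀ v : ι → K, ∑ i, v i = 0 → v ∈ U := by
  refine or_iff_not_imp_left.mpr fun hconst v hsum => ?_
  push Not at hconst
  obtain ⟨w, hw, i, j, hij⟩ := hconst
  obtain ⟨l, hil, hmem⟩ := exists_rootVec_mem_of_ne hι hU hw hij
  refine mem_of_sum_eq_zero_of_forall_rootVec_mem hsum fun a b hab => ?_
  obtain ⟨σ, hσ, rfl, rfl⟩ :=
    exists_mem_alternatingGroup_apply_eq_apply_eq (by lia) hab hil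
  simpa only [rootVec_comp_perm] using hU σ hσ _ hmem

end AlternatingInvariant

section IrreducibleFamily

variable {K V Γ : Type*} [DivisionRing K] [AddCommGroup V] [Module K V] {T : Γ → Module.End K V}

theorem eq_zero_of_forall_apply_eq_self_of_irreducible
    (hT : ∀ W : Submodule K V, (∀ g, ∀ w ∈ W, T g w ∈ W) → W = ⊥ ∨ W = ⊤)
    (hV : Module.finrank K V ≠ 1) {w : V} (hw : ∀ g, T g w = w) : w = 0 := by
  by_contra hw0
  have hspan : K ∙ w = ⊤ := by
    refine (hT (K ∙ w) fun g x hx => ?_).resolve_left (by simpa using hw0)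
    obtain ⟨c, rfl⟩ := Submodule.mem_span_singleton.mp hx
    rwa [map_smul, hw g]
  exact hV (by rw [← finrank_top, ← hspan, finrank_span_singleton hw0])

theorem linearMap_eq_zero_of_forall_apply_eq_of_irreducible
    (hT : ∀ W : Submodule K V, (∀ g, ∀ w ∈ W, T g w ∈ W) → W = ⊥ ∨ W = ⊤)
    (hV : Module.finrank K V ≠ 1) {φ : V →ₗ[K] K} (hφ : ∀ g w, φ (T g w) = φ w) : φ = 0 := by
  by_contra hφ0
  have hker : LinearMap.ker φ = ⊥ := by
    refine (hT (LinearMap.ker φ) fun g w hw => ?_).resolve_right (by simpa using hφ0)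
    rwa [LinearMap.mem_ker, hφ g]
  have hbij : Function.Bijective φ := ⟨LinearMap.ker_eq_bot.mp hker, LinearMap.surjective hφ0⟩
  exact hV (by rw [(LinearEquiv.ofBijective φ hbij).finrank_eq, Module.finrank_self])

end IrreducibleFamily

section N5

local instance fact_prime_five : Fact (Nat.Prime 5) := ⟨Nat.prime_five⟩

theorem mkQ_Lline_eq_zero_iff {v : S0} : Lline.mkQ v = 0 ↔ ∀ i j, v.1 i = v.1 j := by
  rw [Submodule.mkQ_apply, Submodule.Quotient.mk_eq_zero, Lline, Submodule.mem_span_singleton]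
  constructor
  · rintro ⟨c, rfl⟩ _ _
    rfl
  · exact fun hv => ⟨v.1 0, Subtype.ext (funext fun i => by simp [cvec, hv 0 i])⟩

theorem finrank_S0 : Module.finrank (ZMod 5) S0 = 4 := by
  have hne : sumLin ≠ 0 := fun h => by
    simpa [sumLin] using LinearMap.congr_fun h (Pi.single 0 1)
  have hker := Module.Dual.finrank_ker_add_one_of_ne_zero hne
  rw [Module.finrank_fin_fun] at hker
  exact Nat.succ_injective hker

theorem finrank_Lline : Module.finrank (ZMod 5) Lline = 1 := by
  refine finrank_span_singleton fun h => ?_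
  simpa [cvec] using congrFun (congrArg Subtype.val h) 0

theorem finrank_N5 : Module.finrank (ZMod 5) N5 = 3 := by
  have hquot := Submodule.finrank_quotient_add_finrank Lline
  rw [finrank_Lline, finrank_S0] at hquot
  exact Nat.succ_injective hquot

theorem N5_submodule_eq_bot_or_eq_top {W : Submodule (ZMod 5) N5}
    (hW : ∀ g ∈ alternatingGroup (Fin 5), ∀ w ∈ W, permN g w ∈ W) : W = ⊥ ∨ W = ⊤ := by
  set U : Submodule (ZMod 5) (Fin 5 → ZMod 5) := (W.comap Lline.mkQ).map S0.subtype with hU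
  have mem_U (v : S0) : v.1 ∈ U ↔ Lline.mkQ v ∈ W := by simp [hU]
  have hUinv : ∀ σ ∈ alternatingGroup (Fin 5), ∀ v ∈ U, v ∘ σ ∈ U := by
    rintro σ hσ _ ⟨v, hv, rfl⟩
    exact (mem_U (permS σ⁻¹ v)).mpr (hW σ⁻¹ (inv_mem hσ) _ hv)
  refine (constant_or_mem_of_sum_eq_zero (by simp) hUinv).imp (fun hconst => ?_) fun hsum => ?_
  · refine (Submodule.eq_bot_iff W).mpr fun w hw => ?_
    obtain ⟨v, rfl⟩ := Lline.mkQ_surjective w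
    exact mkQ_Lline_eq_zero_iff.mpr (hconst v ((mem_U v).mpr hw))
  · refine Submodule.eq_top_iff'.mpr fun w => ?_
    obtain ⟨v, rfl⟩ := Lline.mkQ_surjective w
    exact (mem_U v).mp (hsum v v.2)

theorem N5_irreducible_general :
    Module.finrank (ZMod 5) N5 = 3 ∧
    (∀ w : N5, (∀ g ∈ alternatingGroup (Fin 5), permN g w = w) → w = 0) ∧
    (∀ φ : N5 →ₗ[ZMod 5] ZMod 5,
      (∀ g ∈ alternatingGroup (Fin 5), ∀ w : N5, φ (permN g w) = φ w) → φ = 0) ∧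
    (∀ W : Submodule (ZMod 5) N5,
      (∀ g ∈ alternatingGroup (Fin 5), ∀ w ∈ W, permN g w ∈ W) → W = ⊥ ∨ W = ⊤) := by
  have hdim : Module.finrank (ZMod 5) N5 ≠ 1 := by simp [finrank_N5]
  have hirr (W : Submodule (ZMod 5) N5)
      (hW : ∀ g : alternatingGroup (Fin 5), ∀ w ∈ W, permN g w ∈ W) : W = ⊥ ∨ W = ⊤ :=
    N5_submodule_eq_bot_or_eq_top (Subtype.forall.mp hW)
  exact ⟨finrank_N5,
    fun _ hw => eq_zero_of_forall_apply_eq_self_of_irreducible hirr hdim (Subtype.forall.mpr hw),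
    fun _ hφ => linearMap_eq_zero_of_forall_apply_eq_of_irreducible hirr hdim
      (Subtype.forall.mpr hφ),
    fun _ => N5_submodule_eq_bot_or_eq_top⟩

end N5

/-- `N₅` is 3-dimensional over `𝔽₅`; every `S₅`-invariant vector of `N₅` is zero; every
`S₅`-invariant `𝔽₅`-linear functional on `N₅` is zero; and `N₅` is irreducible as a module
over the alternating group `A₅`: every subspace invariant under all even coordinate
permutations is `0` or all of `N₅`. -/
theorem N5_irreducible :
    Module.finrank (ZMod 5) N5 = 3 ∧
    (∀ w : N5, (∀ g : Equiv.Perm (Fin 5), permN g w = w) → w = 0) ∧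
    (∀ φ : N5 →ₗ[ZMod 5] ZMod 5,
      (∀ (g : Equiv.Perm (Fin 5)) (w : N5), φ (permN g w) = φ w) → φ = 0) ∧
    (∀ W : Submodule (ZMod 5) N5,
      (∀ g ∈ alternatingGroup (Fin 5), ∀ w ∈ W, permN g w ∈ W) → W = ⊥ ∨ W = ⊤) := by
  obtain ⟨hdim, hfixed, hfunctional, hirr⟩ := N5_irreducible_general
  exact ⟨hdim, fun w hw => hfixed w fun g _ => hw g,
    fun φ hφ => hfunctional φ fun g _ => hφ g, hirr⟩
end
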